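/- The dimension of the irreducible representation of U_k indexed by a k-tuple of partitions λ⃗ = (λ^{(1)},...,λ^{(k)}) with Σ_i i·|λ^{(i)}| = k equals sp_k(λ) · f^{λ^{(1)}} · f^{λ^{(2)}} ··· f^{λ^{(k)}}, where λ = (1^{|λ^{(1)}|} 2^{|λ^{(2)}|} ... k^{|λ^{(k)}|}), sp_k(λ) is the number of set partitions of [k] of type λ, and f^μ is the number of standard Young tableaux of shape μ. -/

import Mathlib

open Sum

/-- A set partition `d` of `[k] ∪ [k̄]` (encoded as a setoid on `Fin k ⊕ Fin k`,
top row = `inl`, bottom row = `inr`) is *uniform* if every block contains as many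
top-row elements as bottom-row elements. -/
def IsUniform (k : ℕ) (d : Setoid (Fin k ⊕ Fin k)) : Prop :=
  ∀ x : Fin k ⊕ Fin k,
    {a : Fin k | d.r (.inl a) x}.ncard = {b : Fin k | d.r (.inr b) x}.ncard

/-- Embedding of a two-row diagram into the top two rows of a three-row diagram. -/
def row12 (k : ℕ) : Fin k ⊕ Fin k → Fin k ⊕ (Fin k ⊕ Fin k) :=
  Sum.elim (fun a => .inl a) (fun b => .inr (.inl b))

/-- Embedding of a two-row diagram into the bottom two rows of a three-row diagram. -/
def row23 (k : ℕ) : Fin k ⊕ Fin k → Fin k ⊕ (Fin k ⊕ Fin k) :=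
  Sum.elim (fun a => .inr (.inl a)) (fun b => .inr (.inr b))

/-- Embedding of a two-row diagram into the outer two rows of a three-row diagram. -/
def row13 (k : ℕ) : Fin k ⊕ Fin k → Fin k ⊕ (Fin k ⊕ Fin k) :=
  Sum.elim (fun a => .inl a) (fun b => .inr (.inr b))

/-- The equivalence relation on the three-row vertex set generated by transporting
`d` along the embedding `f`. -/
def liftSetoid (k : ℕ) (f : Fin k ⊕ Fin k → Fin k ⊕ (Fin k ⊕ Fin k))
    (d : Setoid (Fin k ⊕ Fin k)) : Setoid (Fin k ⊕ (Fin k ⊕ Fin k)) :=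
  Relation.EqvGen.setoid (fun x y => ∃ a b, d.r a b ∧ x = f a ∧ y = f b)

/-- The diagram product: stack `d` on top of `d'`, take connected components of the
three-row diagram, and restrict to the outer rows. -/
def ubpMul {k : ℕ} (d d' : Setoid (Fin k ⊕ Fin k)) : Setoid (Fin k ⊕ Fin k) :=
  Setoid.comap (row13 k) (liftSetoid k (row12 k) d ⊔ liftSetoid k (row23 k) d')

/-- The identity diagram `{{1,1̄},…,{k,k̄}}`. -/
def ubpOne (k : ℕ) : Setoid (Fin k ⊕ Fin k) := Setoid.ker (Sum.elim id id)

/-- The set partition of `[k]` induced on the top row. -/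
def topPart {k : ℕ} (d : Setoid (Fin k ⊕ Fin k)) : Setoid (Fin k) :=
  Setoid.comap Sum.inl d

/-- The set partition of `[k]` induced on the bottom row. -/
def botPart {k : ℕ} (d : Setoid (Fin k ⊕ Fin k)) : Setoid (Fin k) :=
  Setoid.comap Sum.inr d

/-- The idempotent diagram `e_π = {A ∪ Ā : A ∈ π}` associated to a set partition `π` of `[k]`. -/
def ePart {k : ℕ} (π : Setoid (Fin k)) : Setoid (Fin k ⊕ Fin k) :=
  Setoid.comap (Sum.elim id id) π

/-- The diagram `{{i, σ(i)‾} : i ∈ [k]}` of a permutation `σ ∈ S_k`. -/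
def permToUBP {k : ℕ} (σ : Equiv.Perm (Fin k)) : Setoid (Fin k ⊕ Fin k) :=
  Setoid.ker (Sum.elim (fun i => σ i) id)

/-- The reflection `d̃` of a diagram across a horizontal line (swap barred/unbarred). -/
def reflectUBP {k : ℕ} (d : Setoid (Fin k ⊕ Fin k)) : Setoid (Fin k ⊕ Fin k) :=
  Setoid.comap Sum.swap d

/-- The image of a set `C ⊆ [k]` of top-row elements under the block bijection of `d`:
the set of bottom-row elements connected to some element of `C`. -/
def blockMap {k : ℕ} (d : Setoid (Fin k ⊕ Fin k)) (C : Set (Fin k)) : Set (Fin k) :=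
  {j | ∃ i ∈ C, d.r (.inl i) (.inr j)}

/-- The type of uniform block permutations of `[k]`. -/
def UBPel (k : ℕ) : Type := {d : Setoid (Fin k ⊕ Fin k) // IsUniform k d}

/-- The number of standard Young tableaux of shape `μ`: semistandard tableaux with
strictly increasing rows whose entries are exactly `0, 1, …, |μ| - 1`. -/
noncomputable def sytCount (μ : YoungDiagram) : ℕ :=
  Nat.card {T : SemistandardYoungTableau μ //
    (∀ i j : ℕ, (i, j + 1) ∈ μ → T i j < T i (j + 1)) ∧
    Finset.image (fun c : ℕ × ℕ => T c.1 c.2) μ.cells = Finset.range μ.card}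

/-- The index set `I_k` of `k`-tuples `(λ^{(1)},…,λ^{(k)})` of partitions with
`∑ i, i·|λ^{(i)}| = k`; the `i`-th component (`i : Fin k`) records `λ^{(i+1)}`. -/
def UBPIndex (k : ℕ) : Type :=
  {v : Fin k → YoungDiagram // ∑ i : Fin k, ((i : ℕ) + 1) * (v i).card = k}

/-- `sp_k(λ)` for `λ = (1^{|λ^{(1)}|} 2^{|λ^{(2)}|} ⋯ k^{|λ^{(k)}|})`: the number of
set partitions of `[k]` having exactly `|λ^{(i)}|` blocks of size `i`. -/
noncomputable def spCount (k : ℕ) (v : UBPIndex k) : ℕ :=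
  Nat.card {P : Finpartition (Finset.univ : Finset (Fin k)) //
    ∀ i : Fin k, (P.parts.filter (fun b => b.card = (i : ℕ) + 1)).card = (v.1 i).card}

/-!
For each type `a = 1^{a₁} ⋯ k^{a_k}` the monoid `U_k` acts by partial maps on the labellings of the
set partitions of type `a`, and this action commutes with the free action of `∏ S_{a_i}` by
relabelling. As `a` ranges over all types, its matrix entries are the indicator functions of the
principal down-sets of `U_k` under refinement, so they span all functions on `U_k`. Composing with
representations of the `S_{a_i}` whose coefficients span the functions on `S_{a_i}` preserves this
property, and the squares of the resulting dimensions add up to `|U_k|`, so `K[U_k]` is the product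
of the corresponding matrix algebras. For `S_n` the required representations are the Specht modules:
their dimensions are at least `f^μ` by the independence of the standard polytabloids, while
`∑ (f^μ)² = n!` because Young's lattice is a differential poset.
-/

section MatrixColumns

variable {K A I : Type*} {n : I → Type*} [Field K] [Ring A] [Algebra K A]
  [∀ i, Fintype (n i)] [∀ i, DecidableEq (n i)]

/-- For an algebra `A` identified by `Φ` with a product of matrix algebras, the left ideal of the
elements concentrated in the `j`-th column of the `i`-th factor. -/
def columnIdeal (Φ : A ≃ₐ[K] ∀ i, Matrix (n i) (n i) K) (i : I) (j : n i) : Submodule A A where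
  carrier := {a | (∀ i', i' ≠ i → Φ a i' = 0) ∧ ∀ r c, c ≠ j → Φ a i r c = 0}
  zero_mem' := by simp
  add_mem' := by
    rintro a b ⟨ha, ha'⟩ ⟨hb, hb'⟩
    exact ⟨fun i' h => by simp [ha i' h, hb i' h], fun r c h => by simp [ha' r c h, hb' r c h]⟩
  smul_mem' := by
    rintro a b ⟨hb, hb'⟩
    exact ⟨fun i' h => by simp [hb i' h], fun r c h => by simp [Matrix.mul_apply, hb' _ c h]⟩

open scoped Classical in
/-- The element of `A` whose image under `Φ` is the matrix unit `E_{rc}` of the `i`-th factor. -/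
noncomputable def matrixUnit (Φ : A ≃ₐ[K] ∀ i, Matrix (n i) (n i) K) (i : I) (r c : n i) : A :=
  Φ.symm (Pi.single i (Matrix.single r c 1))

variable (Φ : A ≃ₐ[K] ∀ i, Matrix (n i) (n i) K)

open scoped Classical in
lemma map_matrixUnit (i : I) (r c : n i) :
    Φ (matrixUnit Φ i r c) = Pi.single i (Matrix.single r c 1) :=
  Φ.apply_symm_apply _

lemma matrixUnit_mul_matrixUnit (i : I) (r c s : n i) :
    matrixUnit Φ i r c * matrixUnit Φ i c s = matrixUnit Φ i r s :=
  Φ.injective (by classical simp [map_matrixUnit, ← Pi.single_mul])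

lemma sum_matrixUnit [Fintype I] : ∑ i, ∑ r, matrixUnit Φ i r r = 1 := by
  classical
  apply Φ.injective
  ext k a b
  simp only [map_one, map_sum, map_matrixUnit, Finset.sum_apply, Pi.one_apply]
  rw [Finset.sum_eq_single k (fun i _ hi => by simp [hi.symm]) (by simp)]
  simp [Matrix.one_apply, Matrix.sum_apply, Matrix.single_apply, ite_and]

lemma matrixUnit_mem_columnIdeal (i : I) (r j : n i) : matrixUnit Φ i r j ∈ columnIdeal Φ i j :=
  ⟨fun _ h => by classical simp [map_matrixUnit, h],
    fun _ _ h => by classical simp [map_matrixUnit, h.symm]⟩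

open scoped Classical in
/-- Reading off the entries of the `j`-th column identifies `columnIdeal Φ i j` with the space of
column vectors. -/
noncomputable def columnEquiv (i : I) (j : n i) :
    ↥((columnIdeal Φ i j).restrictScalars K) ≃ₗ[K] (n i → K) where
  toFun a r := Φ a.1 i r j
  map_add' a b := by ext; simp
  map_smul' a b := by ext; simp
  invFun v := ⟨Φ.symm (Pi.single i (Matrix.of fun r c => if c = j then v r else 0)),
    fun _ h => by simp [h], fun _ _ h => by simp [h]⟩
  left_inv := by
    rintro ⟨a, ha, ha'⟩
    apply Subtype.ext
    apply Φ.injective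
    ext i' r c
    simp only [AlgEquiv.apply_symm_apply]
    by_cases hi : i' = i
    · subst hi
      by_cases hc : c = j
      · subst hc; simp
      · simp [hc, ha' r c hc]
    · simp [hi, ha i' hi]
  right_inv v := by ext; simp

lemma finrank_columnIdeal (i : I) (j : n i) :
    Module.finrank K ↥((columnIdeal Φ i j).restrictScalars K) = Fintype.card (n i) := by
  rw [(columnEquiv Φ i j).finrank_eq, Module.finrank_fintype_fun_eq_card]

lemma isSimpleModule_columnIdeal (i : I) (j : n i) : IsSimpleModule A ↥(columnIdeal Φ i j) := by
  classical
  rw [isSimpleModule_iff_toSpanSingleton_surjective]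
  refine ⟨⟨⟨matrixUnit Φ i j j, matrixUnit_mem_columnIdeal Φ i j j⟩, 0, fun h => ?_⟩,
    fun x hx y => ?_⟩
  · simpa [map_matrixUnit] using congrArg (fun a => Φ a.1 i j j) h
  · obtain ⟨r, hr⟩ : ∃ r, Φ x.1 i r j ≠ 0 :=
      Function.ne_iff.1 ((columnEquiv Φ i j).map_ne_zero_iff.2 hx)
    refine ⟨Φ.symm (Pi.single i (Matrix.of fun a b => if b = r then
      Φ y.1 i a j * (Φ x.1 i r j)⁻¹ else 0)), (columnEquiv Φ i j).injective ?_⟩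
    ext a
    simp [columnEquiv, Matrix.mul_apply, hr]

lemma eq_of_columnIdeal_equiv {i i' : I} {j : n i} {j' : n i'}
    (e : ↥(columnIdeal Φ i j) ≃ₗ[A] ↥(columnIdeal Φ i' j')) : i = i' := by
  classical
  by_contra hne
  let x : columnIdeal Φ i j := ⟨matrixUnit Φ i j j, matrixUnit_mem_columnIdeal Φ i j j⟩
  have hx : matrixUnit Φ i j j • x = x := Subtype.ext (matrixUnit_mul_matrixUnit Φ i j j j)
  have hex : matrixUnit Φ i j j • e x = 0 := by
    refine Subtype.ext (Φ.injective ?_)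
    ext k a b
    by_cases hk : k = i
    · subst hk
      simp [(e x).2.1 k hne]
    · simp [map_matrixUnit, hk]
  rw [← map_smul, hx, e.map_eq_zero_iff] at hex
  simpa [x, map_matrixUnit] using congrArg (fun a => Φ a.1 i j j) hex

lemma exists_matrixUnit_smul_ne_zero [Finite I] {S : Type*} [AddCommGroup S] [Module A S]
    [Nontrivial S] : ∃ i r, ∃ s : S, matrixUnit Φ i r r • s ≠ 0 := by
  have := Fintype.ofFinite I
  obtain ⟨s, hs⟩ := exists_ne (0 : S)
  by_contra! h
  apply hs
  rw [← one_smul A s, ← sum_matrixUnit Φ]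
  simp [Finset.sum_smul, h]

lemma exists_columnIdeal_equiv [Finite I] (j : ∀ i, n i) {S : Type*} [AddCommGroup S]
    [Module A S] [IsSimpleModule A S] : ∃ i, Nonempty (S ≃ₗ[A] ↥(columnIdeal Φ i (j i))) := by
  have := IsSimpleModule.nontrivial A S
  obtain ⟨i, r, s, hs⟩ := exists_matrixUnit_smul_ne_zero Φ (S := S)
  have := isSimpleModule_columnIdeal Φ i (j i)
  let f : columnIdeal Φ i (j i) →ₗ[A] S :=
    LinearMap.toSpanSingleton A S (matrixUnit Φ i (j i) r • s) ∘ₗ (columnIdeal Φ i (j i)).subtype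
  have hfr : f ⟨matrixUnit Φ i r (j i), matrixUnit_mem_columnIdeal Φ i r _⟩ =
      matrixUnit Φ i r r • s := by
    simp [f, ← mul_smul, matrixUnit_mul_matrixUnit]
  have hf : f ≠ 0 := fun h => hs (by rw [← hfr, h, LinearMap.zero_apply])
  exact ⟨i, ⟨(LinearEquiv.ofBijective f (LinearMap.bijective_of_ne_zero hf)).symm⟩⟩

lemma exists_irreducibles_of_algEquiv_pi_matrix [Finite I] [∀ i, Nonempty (n i)]
    (Φ : A ≃ₐ[K] ∀ i, Matrix (n i) (n i) K) :
    ∃ W : I → Submodule A A, (∀ i, IsSimpleModule A ↥(W i)) ∧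
      (∀ i i', Nonempty (↥(W i) ≃ₗ[A] ↥(W i')) → i = i') ∧
      (∀ S : Submodule A A, IsSimpleModule A ↥S → ∃ i, Nonempty (↥S ≃ₗ[A] ↥(W i))) ∧
      ∀ i, Module.finrank K ↥((W i).restrictScalars K) = Fintype.card (n i) := by
  let j : ∀ i, n i := fun i => Classical.arbitrary (n i)
  exact ⟨fun i => columnIdeal Φ i (j i), fun i => isSimpleModule_columnIdeal Φ i (j i),
    fun i i' ⟨e⟩ => eq_of_columnIdeal_equiv Φ e, fun S _ => exists_columnIdeal_equiv Φ j,
    fun i => finrank_columnIdeal Φ i (j i)⟩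

end MatrixColumns

section CoeffsSpan

variable {K M I : Type*} {n : I → Type*} [Field K] [Monoid M]
  [∀ i, Fintype (n i)] [∀ i, DecidableEq (n i)]

/-- The matrix coefficients `m ↦ ρ i m r c` of the family `ρ` of matrix representations span the
space of all functions on the monoid `M`. -/
def CoeffsSpan (ρ : ∀ i, M →* Matrix (n i) (n i) K) : Prop :=
  Submodule.span K (Set.range fun (x : Σ i, n i × n i) m => ρ x.1 m x.2.1 x.2.2) = ⊤

/-- The joint extension of a family of matrix representations of `M` to the monoid algebra. -/
noncomputable def piLift (ρ : ∀ i, M →* Matrix (n i) (n i) K) :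
    MonoidAlgebra K M →ₐ[K] ∀ i, Matrix (n i) (n i) K :=
  AlgHom.pi fun i => MonoidAlgebra.lift K _ M (ρ i)

lemma piLift_apply_apply [Fintype M] (ρ : ∀ i, M →* Matrix (n i) (n i) K) (a : MonoidAlgebra K M)
    (i : I) (r c : n i) : piLift ρ a i r c = ∑ m, a.coeff m * ρ i m r c := by
  simp only [piLift, AlgHom.pi_apply, MonoidAlgebra.lift_apply]
  rw [Finsupp.sum_fintype _ _ (by simp)]
  simp [Matrix.sum_apply]

-- The functionals on `M → K` are the elements of `K[M]`, and those vanishing on all matrix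
-- coefficients form the kernel of `piLift ρ`.
lemma coeffsSpan_iff_injective [Finite M] {ρ : ∀ i, M →* Matrix (n i) (n i) K} :
    CoeffsSpan ρ ↔ Function.Injective (piLift ρ) := by
  classical
  have := Fintype.ofFinite M
  rw [injective_iff_map_eq_zero]
  constructor
  · intro hρ a ha
    let L : (M → K) →ₗ[K] K := ∑ m, a.coeff m • LinearMap.proj m
    have hL : L = 0 := by
      rw [← LinearMap.ker_eq_top, ← top_le_iff, ← hρ, Submodule.span_le]
      rintro _ ⟨⟨i, r, c⟩, rfl⟩
      simpa [L, piLift_apply_apply] using congrFun (congrFun (congrFun ha i) r) c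
    ext m
    simpa [L, Pi.single_apply] using LinearMap.congr_fun hL (Pi.single m 1)
  · intro hρ
    by_contra hlt
    obtain ⟨L, hL, hker⟩ := Submodule.exists_le_ker_of_lt_top _ (lt_top_iff_ne_top.2 hlt)
    let a : MonoidAlgebra K M := ∑ m, MonoidAlgebra.single m (L (Pi.single m 1))
    have hcoeff : ∀ m, a.coeff m = L (Pi.single m 1) := by
      simp [a, Finsupp.single_apply]
    have hLa : ∀ f, L f = ∑ m, a.coeff m * f m := by
      intro f
      conv_lhs => rw [pi_eq_sum_univ' f]
      simp [hcoeff, mul_comm]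
    have ha : a = 0 := hρ a <| by
      ext i r c
      rw [piLift_apply_apply, ← hLa]
      exact hker (Submodule.subset_span ⟨⟨i, r, c⟩, rfl⟩)
    exact hL (LinearMap.ext fun f => by simp [hLa, ha])

lemma exists_algEquiv_of_coeffsSpan [Fintype I] [Finite M] {ρ : ∀ i, M →* Matrix (n i) (n i) K}
    (hρ : CoeffsSpan ρ) (hcard : ∑ i, Fintype.card (n i) ^ 2 = Nat.card M) :
    Nonempty (MonoidAlgebra K M ≃ₐ[K] ∀ i, Matrix (n i) (n i) K) := by
  have := Fintype.ofFinite M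
  have := Module.Finite.of_basis (MonoidAlgebra.basis M K)
  have hdim : Module.finrank K (MonoidAlgebra K M) =
      Module.finrank K (∀ i, Matrix (n i) (n i) K) := by
    rw [Module.finrank_eq_card_basis (MonoidAlgebra.basis M K), Module.finrank_pi_fintype,
      ← Nat.card_eq_fintype_card, ← hcard]
    simp [Module.finrank_matrix, sq]
  have hinj := coeffsSpan_iff_injective.1 hρ
  exact ⟨AlgEquiv.ofBijective (piLift ρ) ⟨hinj,
    (LinearMap.injective_iff_surjective_of_finrank_eq_finrank (f := (piLift ρ).toLinearMap) hdim).1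
      hinj⟩⟩

end CoeffsSpan

/-- The combinatorial data making a lattice into a (modular) differential poset in the sense of
Stanley: a rank function with finite fibres, along which every element has exactly one more upper
cover than lower covers. -/
structure DifferentialLattice (L : Type*) [Lattice L] where
  rank : L → ℕ
  finite_rank_eq (n : ℕ) : {x | rank x = n}.Finite
  rank_eq_of_covBy {x y : L} : x ⋖ y → rank y = rank x + 1
  ncard_upperCovers (x : L) : {y | x ⋖ y}.ncard = {y | y ⋖ x}.ncard + 1

namespace DifferentialLattice

variable {L : Type*} [Lattice L]

lemma finite_upperCovers (D : DifferentialLattice L) (x : L) : {y | x ⋖ y}.Finite :=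
  (D.finite_rank_eq _).subset fun _ => D.rank_eq_of_covBy

lemma finite_lowerCovers (D : DifferentialLattice L) (x : L) : {y | y ⋖ x}.Finite :=
  (D.finite_rank_eq (D.rank x - 1)).subset fun y (hy : y ⋖ x) => by
    simp [D.rank_eq_of_covBy hy]

variable (D : DifferentialLattice L)

/-- The elements of rank `n`. -/
noncomputable def level (n : ℕ) : Finset L := (D.finite_rank_eq n).toFinset

lemma mem_level {n : ℕ} {x : L} : x ∈ D.level n ↔ D.rank x = n :=
  (D.finite_rank_eq n).mem_toFinset

/-- The elements covering `x`. -/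
noncomputable def up (x : L) : Finset L := (D.finite_upperCovers x).toFinset

/-- The elements covered by `x`. -/
noncomputable def down (x : L) : Finset L := (D.finite_lowerCovers x).toFinset

variable {D} in
lemma mem_up {x y : L} : y ∈ D.up x ↔ x ⋖ y := (D.finite_upperCovers x).mem_toFinset

variable {D} in
lemma mem_down {x y : L} : y ∈ D.down x ↔ y ⋖ x := (D.finite_lowerCovers x).mem_toFinset

lemma card_up (x : L) : (D.up x).card = (D.down x).card + 1 := by
  rw [up, down, ← Set.ncard_eq_toFinset_card _ _, ← Set.ncard_eq_toFinset_card _ _,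
    D.ncard_upperCovers]

variable {R : Type*} [CommSemiring R] [IsModularLattice L]

open Classical in
-- If `x ≠ z` then `x` and `z` are covered by a common element iff they cover a common element:
-- these elements must be `x ⊔ z` and `x ⊓ z`.
lemma sum_up_sum_down_erase (g : L → R) (x : L) :
    ∑ y ∈ D.up x, ∑ z ∈ (D.down y).erase x, g z =
      ∑ y ∈ D.down x, ∑ z ∈ (D.up y).erase x, g z := by
  rw [Finset.sum_sigma', Finset.sum_sigma']
  have hsup {y z : L} (hxy : x ⋖ y) (hzy : z ⋖ y) (hne : z ≠ x) : x ⊔ z = y :=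
    hxy.wcovBy.sup_eq hzy.wcovBy hne.symm
  have hinf {y z : L} (hyx : y ⋖ x) (hyz : y ⋖ z) (hne : z ≠ x) : x ⊓ z = y :=
    hyx.wcovBy.inf_eq hyz.wcovBy hne.symm
  refine Finset.sum_nbij' (fun p => ⟨x ⊓ p.2, p.2⟩) (fun p => ⟨x ⊔ p.2, p.2⟩) ?_ ?_ ?_ ?_ ?_
  · rintro ⟨y, z⟩ h
    simp only [Finset.mem_sigma, mem_up, Finset.mem_erase, mem_down] at h ⊢
    obtain ⟨hxy, hne, hzy⟩ := h
    obtain rfl := hsup hxy hzy hne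
    exact ⟨inf_covBy_of_covBy_sup_right hzy, hne, inf_covBy_of_covBy_sup_left hxy⟩
  · rintro ⟨y, z⟩ h
    simp only [Finset.mem_sigma, mem_up, Finset.mem_erase, mem_down] at h ⊢
    obtain ⟨hyx, hne, hyz⟩ := h
    obtain rfl := hinf hyx hyz hne
    exact ⟨covBy_sup_of_inf_covBy_right hyz, hne, covBy_sup_of_inf_covBy_left hyx⟩
  · rintro ⟨y, z⟩ h
    simp only [Finset.mem_sigma, mem_up, Finset.mem_erase, mem_down] at h
    simp [hsup h.1 h.2.2 h.2.1]
  · rintro ⟨y, z⟩ h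
    simp only [Finset.mem_sigma, mem_up, Finset.mem_erase, mem_down] at h
    simp [hinf h.1 h.2.2 h.2.1]
  · simp

-- Stanley's commutation relation `DU - UD = 1`.
lemma sum_up_sum_down (g : L → R) (x : L) :
    ∑ y ∈ D.up x, ∑ z ∈ D.down y, g z = ∑ y ∈ D.down x, ∑ z ∈ D.up y, g z + g x := by
  classical
  have hup : ∀ y ∈ D.up x, ∑ z ∈ D.down y, g z = g x + ∑ z ∈ (D.down y).erase x, g z :=
    fun y hy => (Finset.add_sum_erase _ _ (mem_down.2 (mem_up.1 hy))).symm
  have hdown : ∀ y ∈ D.down x, ∑ z ∈ D.up y, g z = g x + ∑ z ∈ (D.up y).erase x, g z :=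
    fun y hy => (Finset.add_sum_erase _ _ (mem_up.2 (mem_down.1 hy))).symm
  rw [Finset.sum_congr rfl hup, Finset.sum_congr rfl hdown, Finset.sum_add_distrib,
    Finset.sum_add_distrib, sum_up_sum_down_erase, Finset.sum_const, Finset.sum_const, card_up,
    add_smul, one_smul]
  ring

variable {f : L → R}

lemma sum_up_eq (hf : ∀ x, D.rank x ≠ 0 → f x = ∑ y ∈ D.down x, f y) (x : L) :
    ∑ y ∈ D.up x, f y = (D.rank x + 1) * f x := by
  induction h : D.rank x generalizing x with
  | zero =>
    have hdown : D.down x = ∅ := Finset.eq_empty_of_forall_notMem fun y hy => by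
      have := D.rank_eq_of_covBy (mem_down.1 hy)
      lia
    have hup : ∀ y ∈ D.up x, f y = ∑ z ∈ D.down y, f z := fun y hy =>
      hf y (by rw [D.rank_eq_of_covBy (mem_up.1 hy)]; lia)
    rw [Finset.sum_congr rfl hup, sum_up_sum_down, hdown]
    simp
  | succ n ih =>
    have hup : ∀ y ∈ D.up x, f y = ∑ z ∈ D.down y, f z := fun y hy =>
      hf y (by rw [D.rank_eq_of_covBy (mem_up.1 hy)]; lia)
    have hdown : ∀ y ∈ D.down x, ∑ z ∈ D.up y, f z = (n + 1) * f y := fun y hy =>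
      ih y (by have := D.rank_eq_of_covBy (mem_down.1 hy); lia)
    rw [Finset.sum_congr rfl hup, sum_up_sum_down, Finset.sum_congr rfl hdown, ← Finset.mul_sum,
      ← hf x (by lia)]
    push_cast
    ring

theorem sum_level_sq (hf : ∀ x, D.rank x ≠ 0 → f x = ∑ y ∈ D.down x, f y) (n : ℕ) :
    ∑ x ∈ D.level n, f x ^ 2 = n.factorial * ∑ x ∈ D.level 0, f x ^ 2 := by
  induction n with
  | zero => simp
  | succ n ih =>
    have hmem (x y : L) : x ∈ D.level (n + 1) ∧ y ∈ D.down x ↔ x ∈ D.up y ∧ y ∈ D.level n := by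
      simp only [mem_level, mem_up, mem_down]
      constructor <;> rintro ⟨h, h'⟩
      · exact ⟨h', by have := D.rank_eq_of_covBy h'; lia⟩
      · exact ⟨by have := D.rank_eq_of_covBy h; lia, h⟩
    calc ∑ x ∈ D.level (n + 1), f x ^ 2
        = ∑ x ∈ D.level (n + 1), ∑ y ∈ D.down x, f y * f x :=
          Finset.sum_congr rfl fun x hx => by
            rw [← Finset.sum_mul, ← hf x (by rw [D.mem_level.1 hx]; lia), sq]
      _ = ∑ y ∈ D.level n, ∑ x ∈ D.up y, f y * f x := Finset.sum_comm' hmem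
      _ = ∑ y ∈ D.level n, (n + 1) * f y ^ 2 := Finset.sum_congr rfl fun y hy => by
          rw [← Finset.mul_sum, D.sum_up_eq hf, D.mem_level.1 hy]
          ring
      _ = (n + 1).factorial * ∑ x ∈ D.level 0, f x ^ 2 := by
          rw [← Finset.mul_sum, ih, Nat.factorial_succ]
          push_cast
          ring

end DifferentialLattice

section YoungLattice

variable {μ ν κ : YoungDiagram}

lemma fst_lt_card_of_mem {c : ℕ × ℕ} (h : c ∈ μ) : c.1 < μ.card := by
  have h' := YoungDiagram.mem_iff_lt_colLen.1 h
  rw [YoungDiagram.colLen_eq_card] at h'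
  exact h'.trans_le (Finset.card_le_card (Finset.filter_subset _ _))

lemma snd_lt_card_of_mem {c : ℕ × ℕ} (h : c ∈ μ) : c.2 < μ.card := by
  have h' := YoungDiagram.mem_iff_lt_rowLen.1 h
  rw [YoungDiagram.rowLen_eq_card] at h'
  exact h'.trans_le (Finset.card_le_card (Finset.filter_subset _ _))

lemma finite_card_youngDiagram_eq (n : ℕ) : {μ : YoungDiagram | μ.card = n}.Finite := by
  refine Set.Finite.of_injOn (f := YoungDiagram.cells)
    (t := ((Finset.range n ×ˢ Finset.range n).powerset : Set (Finset (ℕ × ℕ)))) ?_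
    (fun μ _ ν _ h => YoungDiagram.ext h) (Finset.finite_toSet _)
  rintro μ rfl
  simp only [Finset.coe_powerset, Set.mem_preimage, Set.mem_powerset_iff, Finset.coe_subset]
  intro c hc
  simpa using And.intro (fst_lt_card_of_mem hc) (snd_lt_card_of_mem hc)

noncomputable instance fintypeYoungDiagramCardEq (n : ℕ) :
    Fintype {μ : YoungDiagram // μ.card = n} :=
  (finite_card_youngDiagram_eq n).fintype

/-- The Young diagram obtained from `ν` by adding an outer corner `c`. -/
def insertCell (ν : YoungDiagram) (c : ℕ × ℕ) (hc : Minimal (· ∉ ν) c) : YoungDiagram where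
  cells := insert c ν.cells
  isLowerSet a b hba ha := by
    simp only [Finset.coe_insert, Set.mem_insert_iff, Finset.mem_coe, YoungDiagram.mem_cells]
      at ha ⊢
    rcases ha with rfl | ha
    · exact (eq_or_ne b a).imp_right fun h => not_not.1 (hc.not_prop_of_lt (hba.lt_of_ne h))
    · exact Or.inr (ν.up_left_mem hba.1 hba.2 ha)

/-- The Young diagram obtained from `ν` by removing an inner corner `c`. -/
def eraseCell (ν : YoungDiagram) (c : ℕ × ℕ) (hc : Maximal (· ∈ ν) c) : YoungDiagram where
  cells := ν.cells.erase c
  isLowerSet a b hba ha := by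
    simp only [Finset.coe_erase, Set.mem_sdiff, Finset.mem_coe, YoungDiagram.mem_cells,
      Set.mem_singleton_iff] at ha ⊢
    refine ⟨ν.up_left_mem hba.1 hba.2 ha.1, ?_⟩
    rintro rfl
    exact ha.2 (hc.eq_of_le ha.1 hba).symm

lemma card_lt_card_of_lt (h : ν < μ) : ν.card < μ.card :=
  Finset.card_lt_card (YoungDiagram.cells_ssubset_iff.2 h)

lemma covBy_iff_exists_cells_eq_insert :
    ν ⋖ μ ↔ ∃ c, Minimal (· ∉ ν) c ∧ μ.cells = insert c ν.cells := by
  constructor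
  · intro h
    obtain ⟨c, hcμ, hcν⟩ := SetLike.exists_of_lt h.lt
    obtain ⟨d, hdc, hd⟩ := exists_minimal_le_of_wellFoundedLT (· ∉ ν) c hcν
    have hle : insertCell ν d hd ≤ μ := by
      rw [← YoungDiagram.cells_subset_iff]
      exact Finset.insert_subset (μ.up_left_mem hdc.1 hdc.2 hcμ)
        (YoungDiagram.cells_subset_iff.2 h.le)
    have hlt : ν < insertCell ν d hd := by
      rw [← YoungDiagram.cells_ssubset_iff]
      exact Finset.ssubset_insert hd.prop
    exact ⟨d, hd, congrArg YoungDiagram.cells (hle.eq_of_not_lt (h.2 hlt)).symm⟩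
  · rintro ⟨c, hc, h⟩
    refine ⟨?_, fun κ hνκ hκμ => ?_⟩
    · rw [← YoungDiagram.cells_ssubset_iff, h]
      exact Finset.ssubset_insert hc.prop
    · have hνκ := card_lt_card_of_lt hνκ
      have hκμ := card_lt_card_of_lt hκμ
      have : μ.card = ν.card + 1 := by
        rw [YoungDiagram.card, h, Finset.card_insert_of_notMem hc.prop]
      lia

lemma card_eq_of_covBy (h : ν ⋖ μ) : μ.card = ν.card + 1 := by
  obtain ⟨c, hc, h⟩ := covBy_iff_exists_cells_eq_insert.1 h
  rw [YoungDiagram.card, h, Finset.card_insert_of_notMem hc.prop]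

lemma covBy_iff_exists_cells_eq_erase :
    κ ⋖ ν ↔ ∃ c, Maximal (· ∈ ν) c ∧ κ.cells = ν.cells.erase c := by
  rw [covBy_iff_exists_cells_eq_insert]
  constructor
  · rintro ⟨c, hc, h⟩
    have hmem : c ∈ ν := by simp [← YoungDiagram.mem_cells, h]
    refine ⟨c, ⟨hmem, fun d hd hcd => ?_⟩, by rw [h, Finset.erase_insert hc.prop]⟩
    rcases Finset.mem_insert.1 (h ▸ (YoungDiagram.mem_cells d).2 hd) with hd | hdκ
    · exact hd.le
    · exact (hc.prop (κ.up_left_mem hcd.1 hcd.2 hdκ)).elim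
  · rintro ⟨c, hc, h⟩
    have hmem (d : ℕ × ℕ) : d ∈ κ ↔ d ≠ c ∧ d ∈ ν := by simp [← YoungDiagram.mem_cells, h]
    refine ⟨c, ⟨by simp [hmem], fun d hd hdc => ?_⟩, by rw [h, Finset.insert_erase hc.prop]⟩
    by_contra hne
    exact hd ((hmem d).2 ⟨fun h => hne h.ge, ν.up_left_mem hdc.1 hdc.2 hc.prop⟩)

lemma minimal_notMem_youngDiagram_iff {i j : ℕ} :
    Minimal (· ∉ ν) (i, j) ↔ j = ν.rowLen i ∧ (i = 0 ∨ ν.rowLen i < ν.rowLen (i - 1)) := by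
  constructor
  · rintro ⟨hij, hmin⟩
    rw [YoungDiagram.mem_iff_lt_rowLen, not_lt] at hij
    have hj : j = ν.rowLen i :=
      le_antisymm (hmin (y := (i, ν.rowLen i)) (by simp [YoungDiagram.mem_iff_lt_rowLen])
        ⟨le_rfl, hij⟩).2 hij
    subst hj
    refine ⟨rfl, or_iff_not_imp_left.2 fun hi => ?_⟩
    rw [← YoungDiagram.mem_iff_lt_rowLen]
    by_contra hmem
    have : i ≤ i - 1 := (hmin hmem ⟨i.sub_le 1, le_rfl⟩).1
    lia
  · rintro ⟨rfl, hi⟩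
    refine ⟨by simp [YoungDiagram.mem_iff_lt_rowLen], ?_⟩
    rintro ⟨a, b⟩ hab ⟨ha, hb⟩
    rw [YoungDiagram.mem_iff_lt_rowLen, not_lt] at hab
    rcases ha.eq_or_lt with rfl | ha
    · exact ⟨le_rfl, hab⟩
    · have := ν.rowLen_anti a (i - 1) (by lia)
      lia

lemma maximal_mem_youngDiagram_iff {i j : ℕ} :
    Maximal (· ∈ ν) (i, j) ↔ j + 1 = ν.rowLen i ∧ ν.rowLen (i + 1) < ν.rowLen i := by
  constructor
  · rintro ⟨hij, hmax⟩
    have hright : (i, j + 1) ∉ ν := fun h =>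
      absurd (hmax h ⟨le_rfl, j.le_succ⟩).2 j.lt_succ_self.not_ge
    have hbelow : (i + 1, j) ∉ ν := fun h =>
      absurd (hmax h ⟨i.le_succ, le_rfl⟩).1 i.lt_succ_self.not_ge
    rw [YoungDiagram.mem_iff_lt_rowLen] at hij hright hbelow
    lia
  · rintro ⟨hj, hi⟩
    refine ⟨YoungDiagram.mem_iff_lt_rowLen.2 (by lia), ?_⟩
    rintro ⟨a, b⟩ hab ⟨ha, hb⟩
    rw [YoungDiagram.mem_iff_lt_rowLen] at hab
    rcases ha.eq_or_lt with rfl | ha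
    · exact ⟨le_rfl, by lia⟩
    · have := ν.rowLen_anti (i + 1) a ha
      lia

lemma finite_maximal_mem (ν : YoungDiagram) : {c | Maximal (· ∈ ν) c}.Finite :=
  ν.cells.finite_toSet.subset fun _ hc => hc.prop

lemma ncard_minimal_notMem (ν : YoungDiagram) :
    {c | Minimal (· ∉ ν) c}.ncard = {c | Maximal (· ∈ ν) c}.ncard + 1 := by
  have hset : {c | Minimal (· ∉ ν) c} =
      insert (0, ν.rowLen 0) ((fun c => (c.1 + 1, ν.rowLen (c.1 + 1))) ''
        {c | Maximal (· ∈ ν) c}) := by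
    ext ⟨_ | i, j⟩
    · simp [minimal_notMem_youngDiagram_iff]
    · simp only [Set.mem_ofPred_eq, minimal_notMem_youngDiagram_iff, Set.mem_insert_iff,
        Set.mem_image, Prod.exists, maximal_mem_youngDiagram_iff, Prod.mk.injEq, Nat.add_left_inj]
      constructor
      · rintro ⟨rfl, hi⟩
        exact Or.inr ⟨i, ν.rowLen i - 1, by grind⟩
      · grind
  rw [hset, Set.ncard_insert_of_notMem (by simp) ((finite_maximal_mem ν).image _),
    Set.InjOn.ncard_image]
  rintro ⟨i, j⟩ hi ⟨i', j'⟩ hi' h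
  obtain rfl : i = i' := by simpa using congrArg Prod.fst h
  have hj := (maximal_mem_youngDiagram_iff.1 hi).1
  have hj' := (maximal_mem_youngDiagram_iff.1 hi').1
  rw [Prod.mk.injEq]
  lia

lemma ncard_upperCovers_youngDiagram (ν : YoungDiagram) :
    {μ | ν ⋖ μ}.ncard = {c | Minimal (· ∉ ν) c}.ncard := by
  symm
  refine Set.ncard_congr (fun c hc => insertCell ν c hc) ?_ ?_ ?_
  · exact fun c hc => covBy_iff_exists_cells_eq_insert.2 ⟨c, hc, rfl⟩
  · intro c d (hc : Minimal (· ∉ ν) c) hd h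
    have : c ∈ insert d ν.cells := by
      rw [← show insert c ν.cells = insert d ν.cells from congrArg YoungDiagram.cells h]
      exact Finset.mem_insert_self _ _
    exact (Finset.mem_insert.1 this).resolve_right hc.prop
  · intro μ hμ
    obtain ⟨c, hc, h⟩ := covBy_iff_exists_cells_eq_insert.1 hμ
    exact ⟨c, hc, YoungDiagram.ext h.symm⟩

lemma eraseCell_covBy {c : ℕ × ℕ} (hc : Maximal (· ∈ ν) c) : eraseCell ν c hc ⋖ ν :=
  covBy_iff_exists_cells_eq_erase.2 ⟨c, hc, rfl⟩

lemma bijective_eraseCell (ν : YoungDiagram) :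
    Function.Bijective fun c : {c // Maximal (· ∈ ν) c} =>
      (⟨eraseCell ν c.1 c.2, eraseCell_covBy c.2⟩ : {κ // κ ⋖ ν}) := by
  constructor
  · rintro ⟨c, hc⟩ ⟨d, hd⟩ h
    have : c ∉ ν.cells.erase d := by
      rw [← show ν.cells.erase c = ν.cells.erase d from
        congrArg (fun κ => YoungDiagram.cells κ.1) h]
      exact Finset.notMem_erase _ _
    exact Subtype.ext (not_not.1 fun hne => this (Finset.mem_erase.2 ⟨hne, hc.prop⟩))
  · rintro ⟨κ, hκ⟩
    obtain ⟨c, hc, h⟩ := covBy_iff_exists_cells_eq_erase.1 hκ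
    exact ⟨⟨c, hc⟩, Subtype.ext (YoungDiagram.ext h.symm)⟩

lemma ncard_lowerCovers_youngDiagram (ν : YoungDiagram) :
    {κ | κ ⋖ ν}.ncard = {c | Maximal (· ∈ ν) c}.ncard :=
  (Nat.card_congr (Equiv.ofBijective _ (bijective_eraseCell ν))).symm

/-- Young's lattice. -/
def youngLattice : DifferentialLattice YoungDiagram where
  rank := YoungDiagram.card
  finite_rank_eq := finite_card_youngDiagram_eq
  rank_eq_of_covBy := card_eq_of_covBy
  ncard_upperCovers ν := by
    rw [ncard_upperCovers_youngDiagram, ncard_lowerCovers_youngDiagram, ncard_minimal_notMem]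

lemma level_zero_youngLattice : youngLattice.level 0 = {⊥} := by
  ext μ
  rw [DifferentialLattice.mem_level, Finset.mem_singleton, YoungDiagram.ext_iff,
    YoungDiagram.cells_bot]
  exact Finset.card_eq_zero

end YoungLattice

section StandardTableaux

variable {n : ℕ} {μ ν : YoungDiagram} {t s : Fin n → ℕ × ℕ}

/-- The map `t`, sending each entry to the cell that contains it, is a tableau of shape `μ` with
entries `0, …, n - 1`, each occurring once. -/
structure IsTableau (μ : YoungDiagram) (t : Fin n → ℕ × ℕ) : Prop where
  injective : Function.Injective t
  range_eq : Set.range t = μ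

/-- The map `t`, sending each entry to the cell that contains it, is a standard tableau of shape
`μ` with entries `0, …, n - 1`, i.e. its inverse is a linear extension of the order on the cells. -/
structure IsStandard (μ : YoungDiagram) (t : Fin n → ℕ × ℕ) : Prop where
  range_eq : Set.range t = μ
  le_of_le {x y : Fin n} : t x ≤ t y → x ≤ y

lemma IsStandard.isTableau (ht : IsStandard μ t) : IsTableau μ t where
  injective _ _ h := le_antisymm (ht.le_of_le h.le) (ht.le_of_le h.ge)
  range_eq := ht.range_eq

namespace IsTableau

lemma mem (ht : IsTableau μ t) (x : Fin n) : t x ∈ μ := by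
  rw [← SetLike.mem_coe, ← ht.range_eq]
  exact Set.mem_range_self x

lemma exists_eq (ht : IsTableau μ t) {c : ℕ × ℕ} (hc : c ∈ μ) : ∃ x, t x = c := by
  rwa [← SetLike.mem_coe, ← ht.range_eq] at hc

lemma card_eq (ht : IsTableau μ t) : μ.card = n := by
  rw [YoungDiagram.card, ← Finset.card_fin n, ← Finset.card_image_of_injective _ ht.injective]
  congr 1
  ext c
  rw [YoungDiagram.mem_cells, ← SetLike.mem_coe, ← ht.range_eq]
  simp

end IsTableau

lemma exists_isTableau (h : μ.card = n) : ∃ t : Fin n → ℕ × ℕ, IsTableau μ t := by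
  let e : Fin n ≃ μ.cells := (Finset.equivFinOfCardEq h).symm
  refine ⟨fun x => e x, Subtype.val_injective.comp e.injective, ?_⟩
  rw [Set.range_comp' Subtype.val e, e.range_eq_univ, Set.image_univ, Subtype.range_coe]
  rfl

lemma IsStandard.extend_lt (ht : IsStandard μ t) {a b : ℕ × ℕ} (hab : a < b) (hb : b ∈ μ) :
    Function.extend t Fin.val 0 a < Function.extend t Fin.val 0 b := by
  obtain ⟨y, rfl⟩ := ht.isTableau.exists_eq hb
  obtain ⟨x, rfl⟩ : ∃ x, t x = a :=
    ht.isTableau.exists_eq (μ.up_left_mem hab.le.1 hab.le.2 hb)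
  rw [ht.isTableau.injective.extend_apply, ht.isTableau.injective.extend_apply]
  exact lt_of_le_of_ne (ht.le_of_le hab.le) fun h => hab.ne (congrArg t (Fin.ext h))

/-- The tableau of shape `μ` determined by the inverse of `t`. -/
noncomputable def IsStandard.toSemistandard (ht : IsStandard μ t) : SemistandardYoungTableau μ where
  entry i j := Function.extend t Fin.val 0 (i, j)
  row_weak' hj h := (ht.extend_lt (Prod.mk_lt_mk_iff_right.2 hj) h).le
  col_strict' hi h := ht.extend_lt (Prod.mk_lt_mk_iff_left.2 hi) h
  zeros' h := Function.extend_apply' _ _ _ fun ⟨x, hx⟩ => h (hx ▸ ht.isTableau.mem x)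

lemma IsStandard.toSemistandard_apply (ht : IsStandard μ t) (x : Fin n) :
    ht.toSemistandard (t x).1 (t x).2 = x :=
  ht.isTableau.injective.extend_apply _ _ x

lemma IsStandard.image_toSemistandard (ht : IsStandard μ t) :
    Finset.image (fun c : ℕ × ℕ => ht.toSemistandard c.1 c.2) μ.cells = Finset.range n := by
  ext m
  simp only [Finset.mem_image, YoungDiagram.mem_cells, Finset.mem_range]
  constructor
  · rintro ⟨c, hc, rfl⟩
    obtain ⟨x, rfl⟩ := ht.isTableau.exists_eq hc
    exact ht.toSemistandard_apply x ▸ x.isLt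
  · exact fun hm => ⟨t ⟨m, hm⟩, ht.isTableau.mem _, ht.toSemistandard_apply _⟩

lemma IsStandard.eq_of_toSemistandard_eq (ht : IsStandard μ t) (hs : IsStandard μ s)
    (h : ht.toSemistandard = hs.toSemistandard) : t = s := by
  funext x
  obtain ⟨y, hy⟩ := hs.isTableau.exists_eq (ht.isTableau.mem x)
  have hxy : (x : ℕ) = y := by
    rw [← ht.toSemistandard_apply, ← hs.toSemistandard_apply, h, hy]
  rw [← hy, Fin.ext hxy]

lemma exists_toSemistandard_eq (T : SemistandardYoungTableau μ)
    (hT : Finset.image (fun c : ℕ × ℕ => T c.1 c.2) μ.cells = Finset.range μ.card) :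
    ∃ (t : Fin μ.card → ℕ × ℕ) (ht : IsStandard μ t), ht.toSemistandard = T := by
  have hinj : Set.InjOn (fun c : ℕ × ℕ => T c.1 c.2) μ.cells := by
    rw [← Finset.card_image_iff, hT, Finset.card_range]
  have hex (x : Fin μ.card) : ∃ c ∈ μ.cells, T c.1 c.2 = x := by
    rw [← Finset.mem_image (f := fun c : ℕ × ℕ => T c.1 c.2), hT]
    exact Finset.mem_range.2 x.isLt
  choose t htμ htT using hex
  have ht : IsStandard μ t := by
    refine ⟨?_, fun {x y} hxy => ?_⟩
    · refine (Set.range_subset_iff.2 htμ).antisymm fun c hc => ?_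
      have hlt : T c.1 c.2 < μ.card := by
        rw [← Finset.mem_range, ← hT]
        exact Finset.mem_image_of_mem _ hc
      exact ⟨⟨T c.1 c.2, hlt⟩, hinj (htμ _) hc (htT _)⟩
    · rw [Fin.le_def, ← htT, ← htT]
      exact (T.row_weak_of_le hxy.2 (μ.up_left_mem hxy.1 le_rfl (htμ y))).trans
        (T.col_weak hxy.1 (htμ y))
  refine ⟨t, ht, SemistandardYoungTableau.ext fun i j => ?_⟩
  by_cases hij : (i, j) ∈ μ
  · obtain ⟨x, hx⟩ := ht.isTableau.exists_eq hij
    have h := (ht.toSemistandard_apply x).trans (htT x).symm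
    rwa [hx] at h
  · rw [T.zeros hij, ht.toSemistandard.zeros hij]

lemma sytCount_eq_card_isStandard (h : μ.card = n) :
    sytCount μ = Nat.card {t : Fin n → ℕ × ℕ // IsStandard μ t} := by
  subst h
  have hrow (t : {t : Fin μ.card → ℕ × ℕ // IsStandard μ t}) (i j : ℕ) (hij : (i, j + 1) ∈ μ) :
      t.2.toSemistandard i j < t.2.toSemistandard i (j + 1) :=
    t.2.extend_lt (Prod.mk_lt_mk_iff_right.2 j.lt_succ_self) hij
  symm
  refine Nat.card_congr (Equiv.ofBijective
    (fun t => ⟨t.2.toSemistandard, hrow t, t.2.image_toSemistandard⟩) ⟨?_, ?_⟩)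
  · exact fun t s h => Subtype.ext (t.2.eq_of_toSemistandard_eq s.2 (congrArg Subtype.val h))
  · rintro ⟨T, -, hT⟩
    obtain ⟨t, ht, rfl⟩ := exists_toSemistandard_eq T hT
    exact ⟨⟨t, ht⟩, rfl⟩

lemma coe_eraseCell {c : ℕ × ℕ} (hc : Maximal (· ∈ μ) c) :
    (eraseCell μ c hc : Set (ℕ × ℕ)) = (μ : Set (ℕ × ℕ)) \ {c} :=
  Finset.coe_erase c μ.cells

lemma isStandard_snoc_iff {c : ℕ × ℕ} : IsStandard μ (Fin.snoc s c : Fin (n + 1) → ℕ × ℕ) ↔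
    ∃ hc : Maximal (· ∈ μ) c, IsStandard (eraseCell μ c hc) s := by
  constructor
  · intro h
    have hmax : Maximal (· ∈ μ) c := by
      refine ⟨by simpa using h.isTableau.mem (Fin.last n), fun d hd hcd => ?_⟩
      obtain ⟨y, rfl⟩ := h.isTableau.exists_eq hd
      obtain rfl : y = Fin.last n := Fin.last_le_iff.1 (h.le_of_le (by simpa using hcd))
      simp
    have hcs : c ∉ Set.range s := by
      rintro ⟨x, rfl⟩
      exact (Fin.castSucc_lt_last x).ne (h.isTableau.injective (by simp))
    refine ⟨hmax, ?_, fun {x y} hxy => ?_⟩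
    · rw [coe_eraseCell, ← h.range_eq, Fin.range_snoc,
        Set.insert_sdiff_of_mem _ (Set.mem_singleton c), Set.sdiff_singleton_eq_self hcs]
    · exact h.le_of_le (x := x.castSucc) (y := y.castSucc) (by simpa using hxy)
  · rintro ⟨hc, h⟩
    refine ⟨?_, fun {x y} hxy => ?_⟩
    · rw [Fin.range_snoc, h.range_eq, coe_eraseCell, Set.insert_sdiff_singleton,
        Set.insert_eq_of_mem hc.prop]
    · induction y using Fin.lastCases with
      | last => exact Fin.le_last x
      | cast y =>
        have hy : s y ∈ (eraseCell μ c hc : Set (ℕ × ℕ)) := h.range_eq ▸ Set.mem_range_self y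
        rw [coe_eraseCell] at hy
        induction x using Fin.lastCases with
        | last => exact (hy.2 (hc.eq_of_le hy.1 (by simpa using hxy)).symm).elim
        | cast x => exact h.le_of_le (by simpa using hxy)

instance finite_isStandard (n : ℕ) (μ : YoungDiagram) :
    Finite {t : Fin n → ℕ × ℕ // IsStandard μ t} :=
  Finite.of_injective (fun t x => (⟨t.1 x, t.2.isTableau.mem x⟩ : μ.cells)) fun _ _ h =>
    Subtype.ext (funext fun x => congrArg Subtype.val (congrFun h x))

lemma sytCount_bot : sytCount ⊥ = 1 := by
  rw [sytCount_eq_card_isStandard (n := 0) rfl, Nat.card_eq_one_iff_unique]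
  exact ⟨inferInstance, ⟨Fin.elim0, by simp [YoungDiagram.coe_bot], fun {x} => x.elim0⟩⟩

lemma card_isStandard_succ (n : ℕ) (μ : YoungDiagram) :
    Nat.card {t : Fin (n + 1) → ℕ × ℕ // IsStandard μ t} =
      Nat.card (Σ c : {c // Maximal (· ∈ μ) c},
        {s : Fin n → ℕ × ℕ // IsStandard (eraseCell μ c.1 c.2) s}) := by
  symm
  refine Nat.card_congr (Equiv.ofBijective
    (fun p => ⟨Fin.snoc p.2.1 p.1.1, isStandard_snoc_iff.2 ⟨p.1.2, p.2.2⟩⟩) ⟨?_, ?_⟩)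
  · rintro ⟨⟨c, hc⟩, s, hs⟩ ⟨⟨c', hc'⟩, s', hs'⟩ h
    obtain ⟨rfl, rfl⟩ : s = s' ∧ c = c' :=
      Fin.snoc_inj (α := fun _ => ℕ × ℕ).1 (congrArg Subtype.val h)
    rfl
  · rintro ⟨t, ht⟩
    induction t using Fin.snocCases with
    | snoc s c =>
      obtain ⟨hc, hs⟩ := isStandard_snoc_iff.1 ht
      exact ⟨⟨⟨c, hc⟩, s, hs⟩, rfl⟩

lemma sytCount_eq_sum_down (hμ : μ.card ≠ 0) :
    sytCount μ = ∑ ν ∈ youngLattice.down μ, sytCount ν := by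
  obtain ⟨n, hn⟩ := Nat.exists_eq_succ_of_ne_zero hμ
  have : Finite {c // Maximal (· ∈ μ) c} := finite_maximal_mem μ
  have := Fintype.ofFinite {c // Maximal (· ∈ μ) c}
  have : Finite {ν // ν ⋖ μ} := youngLattice.finite_lowerCovers μ
  have := Fintype.ofFinite {ν // ν ⋖ μ}
  have hcard (ν : {ν // ν ⋖ μ}) : ν.1.card = n := by
    have := card_eq_of_covBy ν.2
    lia
  rw [sytCount_eq_card_isStandard hn, card_isStandard_succ, Nat.card_sigma,
    Finset.sum_subtype _ (fun ν => DifferentialLattice.mem_down)]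
  exact Fintype.sum_bijective _ (bijective_eraseCell μ) _ _ fun c =>
    (sytCount_eq_card_isStandard (hcard ⟨_, eraseCell_covBy c.2⟩)).symm

lemma sytCount_pos (μ : YoungDiagram) : 0 < sytCount μ := by
  induction h : μ.card generalizing μ with
  | zero =>
    obtain rfl : μ = ⊥ := by
      rwa [← Finset.mem_singleton, ← level_zero_youngLattice, DifferentialLattice.mem_level]
    rw [sytCount_bot]
    exact one_pos
  | succ n ih =>
    have hμ : μ.card ≠ 0 := h ▸ n.succ_ne_zero
    obtain ⟨c, hc⟩ := Finset.exists_maximal (Finset.card_ne_zero.1 hμ)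
    have hcov := eraseCell_covBy hc
    have hcard : (eraseCell μ c hc).card = n :=
      Nat.succ_injective ((card_eq_of_covBy hcov).symm.trans h)
    rw [sytCount_eq_sum_down hμ]
    exact (ih _ hcard).trans_le
      (Finset.single_le_sum_of_canonicallyOrdered (DifferentialLattice.mem_down.2 hcov))

lemma sum_sytCount_sq (n : ℕ) :
    ∑ μ : {μ : YoungDiagram // μ.card = n}, sytCount μ ^ 2 = n.factorial := by
  have hsum := youngLattice.sum_level_sq (f := sytCount) (fun _ => sytCount_eq_sum_down) n
  rw [level_zero_youngLattice, Finset.sum_singleton, sytCount_bot, one_pow, mul_one,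
    Nat.cast_id] at hsum
  rw [← hsum]
  exact (Finset.sum_subtype _ (fun _ => youngLattice.mem_level) fun μ => sytCount μ ^ 2).symm

end StandardTableaux

section SpanSingleton

variable {K A V : Type*} [Field K] [Ring A] [Algebra K A] [AddCommGroup V] [Module A V]
  [Module K V] [IsScalarTower K A V] {κ : A} {e : V}

lemma mem_or_smul_eq_zero (hline : ∀ a : A, ∃ z : K, κ • a • e = z • e) {U : Submodule A V}
    (hU : U ≤ Submodule.span A {e}) : e ∈ U ∨ ∀ u ∈ U, κ • u = 0 := by
  refine or_iff_not_imp_left.2 fun he u hu => ?_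
  obtain ⟨a, rfl⟩ := Submodule.mem_span_singleton.1 (hU hu)
  obtain ⟨z, hz⟩ := hline a
  obtain rfl : z = 0 := by
    by_contra hz0
    have hze : z • e ∈ U := hz ▸ U.smul_mem κ hu
    exact he ((inv_smul_smul₀ hz0 e) ▸ U.smul_of_tower_mem z⁻¹ hze)
  rw [hz, zero_smul]

lemma isSimpleModule_span_singleton [IsSemisimpleModule A V] (hκ : κ • e ≠ 0)
    (hline : ∀ a : A, ∃ z : K, κ • a • e = z • e) :
    IsSimpleModule A ↥(Submodule.span A {e}) := by
  rw [isSimpleModule_iff_isAtom]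
  have he := Submodule.mem_span_singleton_self (R := A) e
  refine ⟨fun h => hκ ?_, fun U hU => ?_⟩
  · rw [(Submodule.mem_bot A (x := e)).1 (h ▸ he), smul_zero]
  obtain ⟨U', hUU'⟩ := exists_isCompl U
  have hκU : ∀ u ∈ U, κ • u = 0 := (mem_or_smul_eq_zero hline hU.le).resolve_left fun heU =>
    hU.not_ge ((Submodule.span_singleton_le_iff_mem e U).2 heU)
  have hsup : U ⊔ U' ⊓ Submodule.span A {e} = Submodule.span A {e} := by
    rw [← sup_inf_assoc_of_le _ hU.le, hUU'.sup_eq_top, top_inf_eq]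
  have heU' : e ∈ U' ⊓ Submodule.span A {e} := by
    refine (mem_or_smul_eq_zero hline inf_le_right).resolve_right fun hκU' => hκ ?_
    obtain ⟨u, hu, u', hu', hadd⟩ := Submodule.mem_sup.1 (hsup.ge he)
    rw [← hadd, smul_add, hκU u hu, hκU' u' hu', add_zero]
  exact hUU'.disjoint.eq_bot_of_le
    (hU.le.trans ((Submodule.span_singleton_le_iff_mem e U').2 heU'.1))

lemma exists_eq_smul_of_end_span_singleton (hκ : κ • e ≠ 0)
    (hline : ∀ a : A, ∃ z : K, κ • a • e = z • e)
    (φ : Module.End A ↥(Submodule.span A {e})) : ∃ z : K, ∀ x, φ x = z • x := by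
  let e' : ↥(Submodule.span A {e}) := ⟨e, Submodule.mem_span_singleton_self e⟩
  have hspan : ∀ x : ↥(Submodule.span A {e}), ∃ a : A, a • e' = x := fun x =>
    (Submodule.mem_span_singleton.1 x.2).imp fun _ ha => Subtype.ext ha
  have hline' : ∀ x : ↥(Submodule.span A {e}), ∃ z : K, κ • x = z • e' := fun x => by
    obtain ⟨a, rfl⟩ := hspan x
    exact (hline a).imp fun _ hz => Subtype.ext hz
  obtain ⟨c, hc⟩ := hline' e'
  have hc0 : c ≠ 0 := by
    rintro rfl
    exact hκ (by simpa [e'] using congrArg Subtype.val hc)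
  obtain ⟨z, hz⟩ := hline' (φ e')
  have hφe : φ e' = (c⁻¹ * z) • e' := by
    rw [mul_smul, ← hz, ← map_smul, hc, φ.map_smul_of_tower, inv_smul_smul₀ hc0]
  refine ⟨c⁻¹ * z, fun x => ?_⟩
  obtain ⟨a, rfl⟩ := hspan x
  rw [map_smul, hφe, smul_comm]

end SpanSingleton

section Density

variable {K A I : Type*} {S : I → Type*} [Field K] [Ring A]
  [∀ i, AddCommGroup (S i)] [∀ i, Module A (S i)] [∀ i, Module K (S i)]

lemma exists_apply_eq_smul_of_end_pi [Finite I]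
    (hEnd : ∀ i (φ : Module.End A (S i)), ∃ z : K, ∀ x, φ x = z • x)
    (hHom : ∀ i j, i ≠ j → ∀ φ : S i →ₗ[A] S j, φ = 0) (φ : Module.End A (∀ i, S i)) (i : I) :
    ∃ z : K, ∀ x, φ x i = z • x i := by
  classical
  have := Fintype.ofFinite I
  let ψ (j : I) : S j →ₗ[A] S i := LinearMap.proj i ∘ₗ φ ∘ₗ LinearMap.single A S j
  obtain ⟨z, hz⟩ := hEnd i (ψ i)
  refine ⟨z, fun x => ?_⟩
  calc φ x i = ∑ j, ψ j (x j) := by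
        conv_lhs => rw [← Finset.univ_sum_single x, map_sum, Finset.sum_apply]
        rfl
    _ = ψ i (x i) := Finset.sum_eq_single_of_mem i (Finset.mem_univ i) fun j _ hj => by
        rw [hHom j i hj (ψ j), LinearMap.zero_apply]
    _ = z • x i := hz _

variable [Algebra K A] [∀ i, IsScalarTower K A (S i)]

variable (K A S) in
/-- The joint action of the algebra `A` on the modules `S i`. -/
def piLsmul : A →ₐ[K] ∀ i, Module.End K (S i) :=
  AlgHom.pi fun i => Algebra.lsmul K K (S i)

-- By Jacobson density it suffices that the `K`-linear maps `g i` jointly commute with the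
-- endomorphisms of the `A`-module `∀ i, S i`, and these act by a scalar on each factor.
theorem piLsmul_surjective [Finite I] [∀ i, IsSimpleModule A (S i)]
    [∀ i, FiniteDimensional K (S i)]
    (hEnd : ∀ i (φ : Module.End A (S i)), ∃ z : K, ∀ x, φ x = z • x)
    (hHom : ∀ i j, i ≠ j → ∀ φ : S i →ₗ[A] S j, φ = 0) :
    Function.Surjective (piLsmul K A S) := by
  classical
  intro g
  let G : Module.End K (∀ i, S i) := LinearMap.pi fun i => g i ∘ₗ LinearMap.proj i
  let f : Module.End (Module.End A (∀ i, S i)) (∀ i, S i) :=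
    { toFun := G
      map_add' := G.map_add
      map_smul' := fun φ x => by
        funext i
        obtain ⟨z, hz⟩ := exists_apply_eq_smul_of_end_pi hEnd hHom φ i
        change g i (φ x i) = φ (G x) i
        rw [hz, hz, map_smul]
        rfl }
  obtain ⟨s, hs⟩ := Module.Finite.fg_top (R := K) (M := ∀ i, S i)
  obtain ⟨a, ha⟩ := jacobson_density f s
  have hG : G = Algebra.lsmul K K (∀ i, S i) a := LinearMap.ext_on hs ha
  refine ⟨a, funext fun i => LinearMap.ext fun x => ?_⟩
  simpa [piLsmul, G] using (congrFun (LinearMap.congr_fun hG (Pi.single i x)) i).symm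

end Density

section SimpleModules

variable {K M I : Type*} {S : I → Type*} [Field K] [Monoid M] [Fintype I]
  [∀ i, AddCommGroup (S i)] [∀ i, Module (MonoidAlgebra K M) (S i)] [∀ i, Module K (S i)]
  [∀ i, IsScalarTower K (MonoidAlgebra K M) (S i)] [∀ i, FiniteDimensional K (S i)]
  [∀ i, IsSimpleModule (MonoidAlgebra K M) (S i)]

-- Surjectivity of the joint action gives `∑ i, (dim S i) ^ 2 ≤ |M|`, which forces the equality
-- `dim S i = d i` and hence the injectivity of the joint action.
theorem exists_coeffsSpan_of_le_finrank [Finite M]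
    (hEnd : ∀ i (φ : Module.End (MonoidAlgebra K M) (S i)), ∃ z : K, ∀ x, φ x = z • x)
    (hHom : ∀ i j, i ≠ j → ∀ φ : S i →ₗ[MonoidAlgebra K M] S j, φ = 0) {d : I → ℕ}
    (hd : ∀ i, d i ≤ Module.finrank K (S i)) (hcard : ∑ i, d i ^ 2 = Nat.card M) :
    ∃ ρ : ∀ i, M →* Matrix (Fin (d i)) (Fin (d i)) K, CoeffsSpan ρ := by
  have := Fintype.ofFinite M
  have := Module.Finite.of_basis (MonoidAlgebra.basis M K)
  have hM : Module.finrank K (MonoidAlgebra K M) = Nat.card M := by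
    rw [Module.finrank_eq_card_basis (MonoidAlgebra.basis M K), Nat.card_eq_fintype_card]
  have hPi : Module.finrank K (∀ i, Module.End K (S i)) =
      ∑ i, Module.finrank K (S i) ^ 2 := by
    simp [Module.finrank_pi_fintype, Module.finrank_linearMap, sq]
  have hsurj : Function.Surjective (piLsmul K (MonoidAlgebra K M) S).toLinearMap :=
    piLsmul_surjective hEnd hHom
  have hle : ∑ i, Module.finrank K (S i) ^ 2 ≤ ∑ i, d i ^ 2 := by
    rw [hcard, ← hM, ← hPi]
    exact LinearMap.finrank_le_finrank_of_surjective hsurj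
  have hfin : ∀ i, Module.finrank K (S i) = d i := by
    have hsq : ∀ i ∈ Finset.univ, d i ^ 2 ≤ Module.finrank K (S i) ^ 2 :=
      fun i _ => Nat.pow_le_pow_left (hd i) 2
    exact fun i => (Nat.pow_left_injective two_ne_zero <|
      (Finset.sum_eq_sum_iff_of_le hsq).1 (hle.antisymm' (Finset.sum_le_sum hsq)) i
        (Finset.mem_univ i)).symm
  have hinj : Function.Injective (piLsmul K (MonoidAlgebra K M) S).toLinearMap :=
    (LinearMap.injective_iff_surjective_of_finrank_eq_finrank
      (by simp only [hM, hPi, hfin, hcard])).2 hsurj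
  let e (i : I) := LinearMap.toMatrixAlgEquiv (Module.finBasisOfFinrankEq K (S i) (hfin i))
  let Φ (i : I) : MonoidAlgebra K M →ₐ[K] Matrix (Fin (d i)) (Fin (d i)) K :=
    (e i).toAlgHom.comp (Algebra.lsmul K K (S i))
  refine ⟨fun i => (MonoidAlgebra.lift K _ M).symm (Φ i), coeffsSpan_iff_injective.2 ?_⟩
  intro a b hab
  refine hinj (funext fun i => (e i).injective ?_)
  simpa [piLift, piLsmul, Φ] using congrFun hab i

end SimpleModules

section RowWords

variable {n : ℕ} {μ ν : YoungDiagram} {t s : Fin n → ℕ × ℕ} {r : Fin n → ℕ}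

/-- The number of positions at which the word `r` has a letter less than `i`. The row words of
tableaux of two shapes with the same number of cells are compared through these numbers, which is
the dominance order on shapes. -/
noncomputable def countBelow (r : Fin n → ℕ) (i : ℕ) : ℕ := {x | r x < i}.ncard

lemma countBelow_comp (r : Fin n → ℕ) (g : Equiv.Perm (Fin n)) (i : ℕ) :
    countBelow (r ∘ g) i = countBelow r i :=
  Set.ncard_preimage_of_injective_subset_range (s := {x | r x < i}) g.injective (by simp)

lemma countBelow_eq_sum (C r : Fin n → ℕ) (i : ℕ) :
    countBelow r i = ∑ j ∈ Finset.univ.image C, {x | C x = j ∧ r x < i}.ncard := by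
  simp only [countBelow, Set.ncard_eq_toFinset_card', Set.toFinset_ofPred]
  rw [Finset.card_eq_sum_card_fiberwise (f := C) (t := Finset.univ.image C) (fun x _ => by simp)]
  simp only [Finset.filter_filter, and_comm]

namespace IsTableau

lemma exists_perm (ht : IsTableau μ t) (hs : Function.Injective s) (hmem : ∀ x, s x ∈ μ) :
    ∃ g : Equiv.Perm (Fin n), t ∘ g = s := by
  choose g hg using fun x => ht.exists_eq (hmem x)
  have hinj : Function.Injective g := fun x y hxy => hs (by rw [← hg, ← hg, hxy])
  exact ⟨Equiv.ofBijective g (Finite.injective_iff_bijective.1 hinj), funext hg⟩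

lemma ncard_setOf (ht : IsTableau μ t) (p : ℕ × ℕ → Prop) :
    {x | p (t x)}.ncard = {c ∈ (μ : Set (ℕ × ℕ)) | p c}.ncard := by
  rw [← Set.ncard_image_of_injective _ ht.injective, ← ht.range_eq]
  congr 1
  ext c
  constructor
  · rintro ⟨x, hx, rfl⟩
    exact ⟨⟨x, rfl⟩, hx⟩
  · rintro ⟨⟨x, rfl⟩, hx⟩
    exact ⟨x, hx, rfl⟩

lemma ncard_col_below (ht : IsTableau μ t) (i j : ℕ) :
    {x | (t x).2 = j ∧ (t x).1 < i}.ncard = min i (μ.colLen j) := by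
  have hset : {c ∈ (μ : Set (ℕ × ℕ)) | c.2 = j ∧ c.1 < i} =
      (fun a => (a, j)) '' Finset.range (min i (μ.colLen j)) := by
    ext ⟨a, b⟩
    simp only [Set.mem_ofPred_eq, SetLike.mem_coe, Set.mem_image, Finset.coe_range, Set.mem_Iio,
      Prod.mk.injEq, lt_min_iff, ← YoungDiagram.mem_iff_lt_colLen]
    grind
  rw [ht.ncard_setOf fun c => c.2 = j ∧ c.1 < i, hset,
    Set.ncard_image_of_injective _ (Prod.mk_left_injective j), Set.ncard_coe_finset,
    Finset.card_range]

lemma ncard_col (ht : IsTableau μ t) (j : ℕ) : {x | (t x).2 = j}.ncard = μ.colLen j := by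
  rw [← min_self (μ.colLen j), ← ht.ncard_col_below]
  congr 1
  ext x
  simp only [Set.mem_ofPred_eq, iff_self_and]
  rintro rfl
  exact YoungDiagram.mem_iff_lt_colLen.1 (ht.mem x)

lemma ncard_col_below_le (ht : IsTableau μ t)
    (hr : Function.Injective fun x => (r x, (t x).2)) (i j : ℕ) :
    {x | (t x).2 = j ∧ r x < i}.ncard ≤ {x | (t x).2 = j ∧ (t x).1 < i}.ncard := by
  rw [ht.ncard_col_below, le_min_iff]
  constructor
  · conv_rhs => rw [← Finset.card_range i, ← Set.ncard_coe_finset]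
    refine Set.ncard_le_ncard_of_injOn r (fun x hx => by simpa using hx.2) ?_
    exact fun x hx y hy hxy => hr (Prod.ext hxy (hx.1.trans hy.1.symm))
  · rw [← ht.ncard_col]
    exact Set.ncard_le_ncard fun x hx => hx.1

lemma countBelow_le (ht : IsTableau μ t)
    (hr : Function.Injective fun x => (r x, (t x).2)) (i : ℕ) :
    countBelow r i ≤ countBelow (Prod.fst ∘ t) i := by
  rw [countBelow_eq_sum (Prod.snd ∘ t), countBelow_eq_sum (Prod.snd ∘ t)]
  exact Finset.sum_le_sum fun j _ => ht.ncard_col_below_le hr i j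

-- Equality of the counts forces equality in every column, so that each column `j` of the filling
-- by `r` only uses the rows below `μ.colLen j`.
lemma exists_perm_of_countBelow_eq (ht : IsTableau μ t)
    (hr : Function.Injective fun x => (r x, (t x).2))
    (hcount : ∀ i, countBelow r i = countBelow (Prod.fst ∘ t) i) :
    ∃ g : Equiv.Perm (Fin n), t ∘ g = fun x => (r x, (t x).2) := by
  refine ht.exists_perm hr fun x => ?_
  rw [YoungDiagram.mem_iff_lt_colLen]
  have hsum := hcount (μ.colLen (t x).2)
  simp only [countBelow_eq_sum (Prod.snd ∘ t), Function.comp_apply] at hsum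
  rw [Finset.sum_eq_sum_iff_of_le fun j _ => ht.ncard_col_below_le hr _ j] at hsum
  have hcol := hsum (t x).2 (Finset.mem_image_of_mem _ (Finset.mem_univ x))
  rw [ht.ncard_col_below, min_self, ← ht.ncard_col] at hcol
  have heq := Set.eq_of_subset_of_ncard_le (fun _ hy => hy.1) hcol.ge
  have hx : x ∈ {y | (t y).2 = (t x).2} := rfl
  rw [← heq, ht.ncard_col] at hx
  exact hx.2

lemma countBelow_succ (ht : IsTableau μ t) (i : ℕ) :
    countBelow (Prod.fst ∘ t) (i + 1) = countBelow (Prod.fst ∘ t) i + μ.rowLen i := by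
  have hrow : {x | (t x).1 = i}.ncard = μ.rowLen i := by
    rw [ht.ncard_setOf fun c => c.1 = i, YoungDiagram.rowLen_eq_card, ← Set.ncard_coe_finset]
    congr 1
    ext c
    simp [YoungDiagram.mem_row_iff]
  rw [← hrow, countBelow, countBelow, ← Set.ncard_union_eq]
  · congr 1
    ext x
    exact Nat.lt_succ_iff_lt_or_eq
  · exact Set.disjoint_left.2 fun x hlt heq => hlt.ne heq

lemma eq_of_countBelow_eq (ht : IsTableau μ t) (hs : IsTableau ν s)
    (h : ∀ i, countBelow (Prod.fst ∘ t) i = countBelow (Prod.fst ∘ s) i) : μ = ν := by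
  ext ⟨i, j⟩
  have hrow : μ.rowLen i = ν.rowLen i := by
    have hsucc := h (i + 1)
    rw [ht.countBelow_succ, hs.countBelow_succ, h] at hsucc
    exact Nat.add_left_cancel hsucc
  rw [YoungDiagram.mem_cells, YoungDiagram.mem_cells, YoungDiagram.mem_iff_lt_rowLen,
    YoungDiagram.mem_iff_lt_rowLen, hrow]

end IsTableau

namespace IsStandard

-- If `(t x).2 < (s x).2` then the cell `t x` is occupied in `s` by some `y < x`, where `t` and `s`
-- agree.
lemma snd_le_of_forall_lt_eq (ht : IsStandard μ t) (hs : IsStandard μ s) {x : Fin n}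
    (hfst : (t x).1 = (s x).1) (hlt : ∀ y < x, t y = s y) : (s x).2 ≤ (t x).2 := by
  by_contra! hsnd
  obtain ⟨y, hy⟩ := hs.isTableau.exists_eq (ht.isTableau.mem x)
  have hyx : y < x := by
    refine lt_of_le_of_ne (hs.le_of_le (hy ▸ ⟨hfst.le, hsnd.le⟩)) ?_
    rintro rfl
    exact hsnd.ne (congrArg Prod.snd hy.symm)
  exact hyx.ne (ht.isTableau.injective ((hlt y hyx).trans hy))

lemma eq_of_fst_comp_eq (ht : IsStandard μ t) (hs : IsStandard μ s)
    (h : Prod.fst ∘ t = Prod.fst ∘ s) : t = s := by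
  funext x
  induction x using WellFoundedLT.induction with
  | ind x ih =>
    have hfst : (t x).1 = (s x).1 := congrFun h x
    exact Prod.ext hfst (le_antisymm
      (hs.snd_le_of_forall_lt_eq ht hfst.symm fun y hy => (ih y hy).symm)
      (ht.snd_le_of_forall_lt_eq hs hfst ih))

-- At the first `x` with a difference, `g x` lies above `x` in the same column, hence `g x < x`.
lemma toLex_fst_comp_le (ht : IsStandard μ t) {g : Equiv.Perm (Fin n)}
    (hg : ∀ x, (t (g x)).2 = (t x).2) :
    toLex (Prod.fst ∘ t) ≤ toLex (Prod.fst ∘ t ∘ g) := by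
  by_contra! hlt
  obtain ⟨x, hagree, hx⟩ := hlt
  have hgx : g x < x := lt_of_le_of_ne (ht.le_of_le ⟨hx.le, (hg x).le⟩) fun h =>
    hx.ne (congrArg (fun y => (t y).1) h)
  have hggx : t (g (g x)) = t (g x) := Prod.ext (hagree _ hgx) (hg _)
  exact hgx.ne (g.injective (ht.isTableau.injective hggx))

end IsStandard

end RowWords

section Antisymmetrizer

open Equiv MonoidAlgebra

variable {K α β : Type*}

/-- The subgroup of the permutations preserving every fiber of `C`; for `C` sending each entry of a
tableau to its column, this is the column stabilizer. -/
def fiberStab (C : α → β) : Subgroup (Perm α) where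
  carrier := {g | ∀ x, C (g x) = C x}
  mul_mem' hg hh x := (hg _).trans (hh x)
  one_mem' _ := rfl
  inv_mem' {g} hg x := by simpa using (hg (g⁻¹ x)).symm

lemma mem_fiberStab {C : α → β} {g : Perm α} : g ∈ fiberStab C ↔ ∀ x, C (g x) = C x := Iff.rfl

variable [Field K] [Fintype α] [DecidableEq α]

open scoped Classical in
variable (K) in
/-- The antisymmetrizer of a subgroup `H` of the symmetric group: the sum of the elements of `H`,
each with its sign as coefficient. -/
noncomputable def antisymmetrizer (H : Subgroup (Perm α)) : MonoidAlgebra K (Perm α) :=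
  ∑ h with h ∈ H, single h ((Perm.sign h : ℤ) : K)

lemma sign_mul_sign (g : Perm α) : ((Perm.sign g : ℤ) : K) * ((Perm.sign g : ℤ) : K) = 1 := by
  rw [← Int.cast_mul, ← Units.val_mul, Int.units_mul_self, Units.val_one, Int.cast_one]

lemma antisymmetrizer_mul_single {H : Subgroup (Perm α)} {h : Perm α} (hh : h ∈ H) :
    antisymmetrizer K H * single h 1 = ((Perm.sign h : ℤ) : K) • antisymmetrizer K H := by
  simp only [antisymmetrizer, Finset.sum_mul, Finset.smul_sum, single_mul_single, mul_one,
    smul_single, smul_eq_mul]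
  refine Finset.sum_equiv (Equiv.mulRight h) (fun g => ?_) fun g _ => ?_
  · simp [H.mul_mem_cancel_right hh]
  · rw [coe_mulRight, Perm.sign_mul, Units.val_mul, Int.cast_mul, mul_left_comm, sign_mul_sign,
      mul_one]

lemma antisymmetrizer_mul_self (H : Subgroup (Perm α)) :
    antisymmetrizer K H * antisymmetrizer K H = (Nat.card H : K) • antisymmetrizer K H := by
  classical
  have hmul : ∀ h ∈ H, antisymmetrizer K H * single h ((Perm.sign h : ℤ) : K) =
      antisymmetrizer K H := fun h hh => by
    have hsingle : single h ((Perm.sign h : ℤ) : K) = ((Perm.sign h : ℤ) : K) • single h 1 := by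
      rw [smul_single, smul_eq_mul, mul_one]
    rw [hsingle, mul_smul_comm, antisymmetrizer_mul_single hh, smul_smul,
      sign_mul_sign, one_smul]
  calc antisymmetrizer K H * antisymmetrizer K H
      = ∑ h with h ∈ H, antisymmetrizer K H * single h ((Perm.sign h : ℤ) : K) :=
        Finset.mul_sum ..
    _ = ∑ h with h ∈ H, antisymmetrizer K H :=
        Finset.sum_congr rfl fun h hh => hmul h (Finset.mem_filter.1 hh).2
    _ = (Nat.card H : K) • antisymmetrizer K H := by
        rw [Finset.sum_const, Nat.cast_smul_eq_nsmul, ← Fintype.card_subtype,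
          Nat.card_eq_fintype_card]

lemma single_mul_antisymmetrizer_fiberStab_comp (C : α → β) (g : Perm α) :
    single g 1 * antisymmetrizer K (fiberStab (C ∘ g)) =
      antisymmetrizer K (fiberStab C) * single g 1 := by
  simp only [antisymmetrizer, Finset.sum_mul, Finset.mul_sum, single_mul_single, mul_one, one_mul]
  refine Finset.sum_equiv (MulAut.conj g).toEquiv (fun h => ?_) fun h _ => ?_
  · simpa [mem_fiberStab] using g.forall_congr_left (p := fun x => C (g (h x)) = C (g x))
  · simp [mul_right_comm _ ((Perm.sign h : ℤ) : K), sign_mul_sign]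

end Antisymmetrizer

section Words

open Equiv MonoidAlgebra

variable {K α β : Type*} [Field K]

variable (K α β) in
/-- The permutation representation of the symmetric group on words with letters in `β` and
positions in `α`. -/
def wordRep : Representation K (Perm α) ((α → β) → K) where
  toFun g := LinearMap.funLeft K K fun r => r ∘ g
  map_one' := rfl
  map_mul' _ _ := rfl

variable [DecidableEq (α → β)]

variable (K) in
/-- The basis vector of the word `r` in the module `wordRep K α β`. -/
def word (r : α → β) : (wordRep K α β).asModule :=
  (wordRep K α β).asModuleEquiv.symm (Pi.single r 1)

lemma word_apply (r s : α → β) :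
    (wordRep K α β).asModuleEquiv (word K r) s = if s = r then 1 else 0 := by
  rw [word, LinearEquiv.apply_symm_apply, Pi.single_apply]

lemma single_smul_word (g : Perm α) (c : K) (r : α → β) :
    single g c • word K r = c • word K (r ∘ (g⁻¹ : Perm α)) := by
  rw [Representation.single_smul]
  congr 1
  apply (wordRep K α β).asModuleEquiv.injective
  funext s
  change (Pi.single r 1 : (α → β) → K) (s ∘ g) = (Pi.single (r ∘ ⇑g⁻¹) 1 : (α → β) → K) s
  simp only [Pi.single_apply, Perm.inv_def, Equiv.eq_comp_symm]

variable [Fintype α] [DecidableEq α]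

lemma antisymmetrizer_smul_word_comp {H : Subgroup (Perm α)} {h : Perm α} (hh : h ∈ H) (r : α → β) :
    antisymmetrizer K H • word K (r ∘ h) =
      ((Perm.sign h : ℤ) : K) • antisymmetrizer K H • word K r := by
  rw [← smul_assoc, ← Perm.sign_inv, ← antisymmetrizer_mul_single (H.inv_mem hh), mul_smul,
    single_smul_word, one_smul, inv_inv]

-- The transposition of `x` and `y` fixes the word but changes the sign.
lemma antisymmetrizer_smul_word_eq_zero [CharZero K] {H : Subgroup (Perm α)} {r : α → β} {x y : α}
    (hxy : x ≠ y) (hH : swap x y ∈ H) (hr : r x = r y) : antisymmetrizer K H • word K r = 0 := by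
  have hswap : r ∘ swap x y = r := by
    rw [comp_swap_eq_update, hr, Function.update_eq_self, ← hr, Function.update_eq_self]
  have h := antisymmetrizer_smul_word_comp (K := K) hH r
  rw [hswap, Perm.sign_swap hxy, Units.val_neg, Units.val_one, Int.cast_neg, Int.cast_one,
    neg_smul, one_smul, eq_neg_iff_add_eq_zero, ← two_smul K] at h
  exact (smul_eq_zero.1 h).resolve_left two_ne_zero

open scoped Classical in
lemma antisymmetrizer_smul_word_apply (H : Subgroup (Perm α)) (r s : α → β) :
    (wordRep K α β).asModuleEquiv (antisymmetrizer K H • word K r) s =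
      ∑ h with h ∈ H, if s ∘ h = r then ((Perm.sign h : ℤ) : K) else 0 := by
  simp only [antisymmetrizer, Finset.sum_smul, single_smul_word, map_sum, map_smul,
    Finset.sum_apply, Pi.smul_apply, word_apply, smul_eq_mul, mul_ite, mul_one, mul_zero,
    Perm.inv_def, Equiv.eq_comp_symm]

end Words

section Specht

open Equiv MonoidAlgebra

variable {K : Type*} [Field K] {n : ℕ} {μ ν : YoungDiagram} {t s : Fin n → ℕ × ℕ}

variable (K) in
/-- The polytabloid of the tableau `t`, obtained by antisymmetrizing its row word over its column
stabilizer. -/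
noncomputable def polytabloid (t : Fin n → ℕ × ℕ) : (wordRep K (Fin n) ℕ).asModule :=
  antisymmetrizer K (fiberStab (Prod.snd ∘ t)) • word K (Prod.fst ∘ t)

variable (K) in
/-- The Specht module spanned by the polytabloids of the tableaux of the same shape as `t`. -/
noncomputable abbrev specht (t : Fin n → ℕ × ℕ) :
    Submodule (MonoidAlgebra K (Perm (Fin n))) (wordRep K (Fin n) ℕ).asModule :=
  Submodule.span _ {polytabloid K t}

lemma single_smul_polytabloid_comp (t : Fin n → ℕ × ℕ) (g : Perm (Fin n)) :
    (single g 1 : MonoidAlgebra K (Perm (Fin n))) • polytabloid K (t ∘ g) = polytabloid K t := by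
  rw [polytabloid, ← Function.comp_assoc, ← mul_smul, single_mul_antisymmetrizer_fiberStab_comp,
    mul_smul, single_smul_word, one_smul, polytabloid]
  congr 2
  ext x
  simp

lemma swap_mem_fiberStab {α β : Type*} [DecidableEq α] {C : α → β} {x y : α} (h : C x = C y) :
    swap x y ∈ fiberStab C := fun z => by
  rw [swap_apply_def]
  split_ifs with hx hy
  · rw [hx, h]
  · rw [hy, h]
  · rfl

lemma antisymmetrizer_fiberStab_smul_word_eq_zero [CharZero K] {C r : Fin n → ℕ}
    (h : ¬ Function.Injective fun x => (r x, C x)) :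
    antisymmetrizer K (fiberStab C) • word K r = 0 := by
  obtain ⟨x, y, hxy, hne⟩ := Function.not_injective_iff.1 h
  exact antisymmetrizer_smul_word_eq_zero hne (swap_mem_fiberStab (congrArg Prod.snd hxy))
    (congrArg Prod.fst hxy)

lemma antisymmetrizer_smul_polytabloid (t : Fin n → ℕ × ℕ) :
    antisymmetrizer K (fiberStab (Prod.snd ∘ t)) • polytabloid K t =
      (Nat.card (fiberStab (Prod.snd ∘ t)) : K) • polytabloid K t := by
  rw [polytabloid, ← mul_smul, antisymmetrizer_mul_self, smul_assoc]

namespace IsTableau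

lemma polytabloid_apply_self (ht : IsTableau μ t) :
    (wordRep K (Fin n) ℕ).asModuleEquiv (polytabloid K t) (Prod.fst ∘ t) = 1 := by
  classical
  rw [polytabloid, antisymmetrizer_smul_word_apply, Finset.sum_eq_single_of_mem 1]
  · simp
  · simp
  · intro g hg hne
    refine if_neg fun hrow => hne (Equiv.ext fun x => ht.injective ?_)
    exact Prod.ext (congrFun hrow x) ((Finset.mem_filter.1 hg).2 x)

lemma antisymmetrizer_smul_polytabloid_ne_zero [CharZero K] (ht : IsTableau μ t) :
    antisymmetrizer K (fiberStab (Prod.snd ∘ t)) • polytabloid K t ≠ 0 := by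
  rw [antisymmetrizer_smul_polytabloid]
  refine smul_ne_zero (Nat.cast_ne_zero.2 Nat.card_pos.ne') fun h => ?_
  simpa [h] using ht.polytabloid_apply_self (K := K)

lemma exists_antisymmetrizer_smul_word [CharZero K] (ht : IsTableau μ t)
    (a : MonoidAlgebra K (Perm (Fin n))) :
    ∃ z : K, antisymmetrizer K (fiberStab (Prod.snd ∘ t)) • a • word K (Prod.fst ∘ t) =
      z • polytabloid K t := by
  induction a using MonoidAlgebra.induction_linear with
  | zero => exact ⟨0, by simp⟩
  | add a b ha hb =>
    obtain ⟨z, hz⟩ := ha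
    obtain ⟨w, hw⟩ := hb
    exact ⟨z + w, by rw [add_smul, smul_add, hz, hw, add_smul]⟩
  | single g c =>
    rw [single_smul_word, smul_comm]
    by_cases hr : Function.Injective fun x => (((Prod.fst ∘ t) ∘ ⇑g⁻¹) x, (Prod.snd ∘ t) x)
    · obtain ⟨f, hf⟩ := ht.exists_perm_of_countBelow_eq hr (countBelow_comp _ _)
      have hword : (Prod.fst ∘ t) ∘ ⇑g⁻¹ = (Prod.fst ∘ t) ∘ f :=
        funext fun x => (congrArg Prod.fst (congrFun hf x)).symm
      have hfiber : f ∈ fiberStab (Prod.snd ∘ t) := fun x =>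
        (congrArg Prod.snd (congrFun hf x) :)
      rw [hword, antisymmetrizer_smul_word_comp hfiber, smul_smul]
      exact ⟨_, rfl⟩
    · exact ⟨0, by rw [antisymmetrizer_fiberStab_smul_word_eq_zero hr, smul_zero, zero_smul]⟩

lemma exists_antisymmetrizer_smul_polytabloid [CharZero K] (ht : IsTableau μ t)
    (a : MonoidAlgebra K (Perm (Fin n))) :
    ∃ z : K, antisymmetrizer K (fiberStab (Prod.snd ∘ t)) • a • polytabloid K t =
      z • polytabloid K t := by
  rw [polytabloid, ← mul_smul a]
  exact ht.exists_antisymmetrizer_smul_word _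

lemma isSimpleModule_specht [CharZero K] (ht : IsTableau μ t) :
    IsSimpleModule (MonoidAlgebra K (Perm (Fin n))) ↥(specht K t) :=
  isSimpleModule_span_singleton ht.antisymmetrizer_smul_polytabloid_ne_zero
    ht.exists_antisymmetrizer_smul_polytabloid

lemma exists_eq_smul_of_end_specht [CharZero K] (ht : IsTableau μ t)
    (φ : Module.End (MonoidAlgebra K (Perm (Fin n))) ↥(specht K t)) :
    ∃ z : K, ∀ x, φ x = z • x :=
  exists_eq_smul_of_end_span_singleton ht.antisymmetrizer_smul_polytabloid_ne_zero
    ht.exists_antisymmetrizer_smul_polytabloid φ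

lemma countBelow_le_of_smul_ne_zero [CharZero K] (ht : IsTableau μ t) {r : Fin n → ℕ}
    {a : MonoidAlgebra K (Perm (Fin n))}
    (ha : antisymmetrizer K (fiberStab (Prod.snd ∘ t)) • a • word K r ≠ 0) (i : ℕ) :
    countBelow r i ≤ countBelow (Prod.fst ∘ t) i := by
  contrapose! ha
  induction a using MonoidAlgebra.induction_linear with
  | zero => rw [zero_smul, smul_zero]
  | add a b ha hb => rw [add_smul, smul_add, ha, hb, add_zero]
  | single g c =>
    rw [single_smul_word, smul_comm, antisymmetrizer_fiberStab_smul_word_eq_zero, smul_zero]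
    intro hr
    have hle := ht.countBelow_le hr i
    rw [countBelow_comp] at hle
    exact hle.not_gt ha

lemma countBelow_le_of_injective [CharZero K] (ht : IsTableau μ t)
    {φ : specht K t →ₗ[MonoidAlgebra K (Perm (Fin n))] specht K s} (hφ : Function.Injective φ)
    (i : ℕ) : countBelow (Prod.fst ∘ s) i ≤ countBelow (Prod.fst ∘ t) i := by
  let e : specht K t := ⟨polytabloid K t, Submodule.mem_span_singleton_self _⟩
  obtain ⟨b, hb⟩ := Submodule.mem_span_singleton.1 (φ e).2
  rw [polytabloid, ← mul_smul] at hb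
  refine ht.countBelow_le_of_smul_ne_zero (K := K)
    (a := b * antisymmetrizer K (fiberStab (Prod.snd ∘ s))) ?_ i
  rw [hb, ← Submodule.coe_smul, ← map_smul]
  refine fun hzero => ht.antisymmetrizer_smul_polytabloid_ne_zero (K := K) ?_
  exact congrArg Subtype.val (hφ ((Subtype.ext hzero).trans (map_zero φ).symm) :
    antisymmetrizer K (fiberStab (Prod.snd ∘ t)) • e = 0)

lemma hom_specht_eq_zero [CharZero K] (ht : IsTableau μ t) (hs : IsTableau ν s) (hμν : μ ≠ ν)
    (φ : specht K t →ₗ[MonoidAlgebra K (Perm (Fin n))] specht K s) : φ = 0 := by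
  have := ht.isSimpleModule_specht (K := K)
  have := hs.isSimpleModule_specht (K := K)
  refine (LinearMap.bijective_or_eq_zero (R := MonoidAlgebra K (Perm (Fin n)))
    (M := specht K t) (N := specht K s) φ).resolve_left fun hbij => hμν ?_
  let e := LinearEquiv.ofBijective φ hbij
  exact ht.eq_of_countBelow_eq hs fun i => le_antisymm
    (hs.countBelow_le_of_injective (φ := e.symm.toLinearMap) e.symm.injective i)
    (ht.countBelow_le_of_injective hbij.injective i)

lemma polytabloid_mem_specht (ht : IsTableau μ t) (hs : IsTableau μ s) :
    polytabloid K s ∈ specht K t := by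
  obtain ⟨g, rfl⟩ := hs.exists_perm ht.injective ht.mem
  rw [← single_smul_polytabloid_comp s g]
  exact Submodule.smul_mem _ _ (Submodule.mem_span_singleton_self _)

end IsTableau

-- A linear relation is evaluated at the row word that is lexicographically minimal among those of
-- the tableaux with nonzero coefficient.
lemma linearIndependent_polytabloid :
    LinearIndependent K fun t : {t : Fin n → ℕ × ℕ // IsStandard μ t} => polytabloid K t.1 := by
  classical
  rw [linearIndependent_iff']
  intro S c hsum t ht
  by_contra hct
  obtain ⟨t, ht, hmin⟩ := Finset.exists_min_image (S.filter fun t => c t ≠ 0)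
    (fun t => toLex (Prod.fst ∘ t.1)) ⟨t, by simp [ht, hct]⟩
  rw [Finset.mem_filter] at ht
  have heval := congrFun (congrArg (wordRep K (Fin n) ℕ).asModuleEquiv hsum) (Prod.fst ∘ t.1)
  rw [map_sum, map_zero, Finset.sum_apply, Finset.sum_eq_single_of_mem t ht.1, map_smul,
    Pi.smul_apply, t.2.isTableau.polytabloid_apply_self] at heval
  · exact ht.2 (by simpa using heval)
  · intro s hs hne
    by_cases hc : c s = 0
    · rw [hc, zero_smul, map_zero, Pi.zero_apply]
    rw [map_smul, Pi.smul_apply, polytabloid, antisymmetrizer_smul_word_apply,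
      Finset.sum_eq_zero, smul_zero]
    intro g hg
    refine if_neg fun hrow => hne (Subtype.ext (s.2.eq_of_fst_comp_eq t.2 ?_))
    have hcol : g⁻¹ ∈ fiberStab (Prod.snd ∘ s.1) := inv_mem (Finset.mem_filter.1 hg).2
    have hle := s.2.toLex_fst_comp_le hcol
    have hrow' : Prod.fst ∘ s.1 ∘ ⇑g⁻¹ = Prod.fst ∘ t.1 := by
      rw [← Function.comp_assoc, ← hrow, Perm.inv_def, Equiv.comp_symm_eq]
    rw [hrow'] at hle
    exact toLex.injective (le_antisymm hle (hmin s (by simp [hs, hc])))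

end Specht

section SymmetricGroup

open Equiv

variable {K : Type*} [Field K] {n : ℕ} {μ : YoungDiagram} {t : Fin n → ℕ × ℕ}

instance finiteDimensional_specht : FiniteDimensional K (specht K t) := by
  have := Module.Finite.of_basis (MonoidAlgebra.basis (Perm (Fin n)) K)
  exact Module.Finite.trans (MonoidAlgebra K (Perm (Fin n))) _

lemma IsTableau.sytCount_le_finrank_specht (ht : IsTableau μ t) :
    sytCount μ ≤ Module.finrank K (specht K t) := by
  have hlin : LinearIndependent K fun s : {s : Fin n → ℕ × ℕ // IsStandard μ s} =>
      (⟨polytabloid K s.1, ht.polytabloid_mem_specht s.2.isTableau⟩ : specht K t) :=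
    LinearIndependent.of_comp ((specht K t).subtype.restrictScalars K) linearIndependent_polytabloid
  rw [sytCount_eq_card_isStandard ht.card_eq]
  have := Fintype.ofFinite {s : Fin n → ℕ × ℕ // IsStandard μ s}
  rw [Nat.card_eq_fintype_card]
  exact hlin.fintype_card_le_finrank

variable (K n) in
theorem exists_coeffsSpan_perm [CharZero K] :
    ∃ ρ : ∀ μ : {μ : YoungDiagram // μ.card = n},
      Perm (Fin n) →* Matrix (Fin (sytCount μ)) (Fin (sytCount μ)) K, CoeffsSpan ρ := by
  choose t ht using fun μ : {μ : YoungDiagram // μ.card = n} => exists_isTableau μ.2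
  have := fun μ => (ht μ).isSimpleModule_specht (K := K)
  have hcard : ∑ μ : {μ : YoungDiagram // μ.card = n}, sytCount μ ^ 2 =
      Nat.card (Perm (Fin n)) := by
    rw [Nat.card_perm, Nat.card_fin, sum_sytCount_sq]
  exact exists_coeffsSpan_of_le_finrank (S := fun μ => specht K (t μ))
    (fun μ => (ht μ).exists_eq_smul_of_end_specht)
    (fun μ ν hμν => (ht μ).hom_specht_eq_zero (ht ν) (Subtype.coe_injective.ne hμν))
    (fun μ => (ht μ).sytCount_le_finrank_specht) hcard

end SymmetricGroup

section ProductRep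

variable {K ι : Type*} [Field K] [Fintype ι] {G : ι → Type*}

lemma span_range_prod_eq_top [∀ i, Finite (G i)] {J : ι → Type*} [∀ i, Finite (J i)]
    {v : ∀ i, J i → G i → K} (hv : ∀ i, Submodule.span K (Set.range (v i)) = ⊤) :
    Submodule.span K (Set.range fun (x : ∀ i, J i) (g : ∀ i, G i) => ∏ i, v i (x i) (g i)) = ⊤ := by
  classical
  have (i : ι) := Fintype.ofFinite (J i)
  have hsingle : ∀ i (y : G i), ∃ c : J i → K, ∑ j, c j • v i j = Pi.single y 1 := fun i y =>
    (Submodule.mem_span_range_iff_exists_fun K).1 (hv i ▸ Submodule.mem_top)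
  choose c hc using hsingle
  rw [← top_le_iff, ← (Pi.basisFun K (∀ i, G i)).span_eq, Submodule.span_le]
  rintro _ ⟨y, rfl⟩
  refine (Submodule.mem_span_range_iff_exists_fun K).2
    ⟨fun x => ∏ i, c i (y i) (x i), funext fun g => ?_⟩
  have hexpand : ∏ i, (Pi.single (y i) 1 : G i → K) (g i) =
      ∑ x : ∀ i, J i, ∏ i, c i (y i) (x i) * v i (x i) (g i) := by
    simp only [← hc, Finset.sum_apply, Pi.smul_apply, smul_eq_mul, Finset.prod_univ_sum,
      Fintype.piFinset_univ]
  simp only [Finset.sum_apply, Pi.smul_apply, smul_eq_mul, ← Finset.prod_mul_distrib, ← hexpand,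
    Pi.basisFun_apply, Pi.single_apply, Finset.prod_ite_zero, Finset.mem_univ, true_imp_iff,
    Finset.prod_const_one, funext_iff]

variable [DecidableEq ι] [∀ i, Monoid (G i)]

/-- The external tensor product of matrix representations of the factors of a product monoid. -/
def piRep {t : ι → Type*} [∀ i, Fintype (t i)] [∀ i, DecidableEq (t i)]
    (ρ : ∀ i, G i →* Matrix (t i) (t i) K) :
    (∀ i, G i) →* Matrix (∀ i, t i) (∀ i, t i) K where
  toFun g := Matrix.of fun r c => ∏ i, ρ i (g i) (r i) (c i)
  map_one' := by
    ext r c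
    simp only [Pi.one_apply, map_one, Matrix.of_apply, Matrix.one_apply, Finset.prod_ite_zero,
      Finset.mem_univ, true_imp_iff, Finset.prod_const_one, funext_iff]
  map_mul' g h := by
    ext r c
    simp only [Pi.mul_apply, map_mul, Matrix.of_apply, Matrix.mul_apply, Finset.prod_univ_sum,
      Fintype.piFinset_univ, Finset.prod_mul_distrib]

lemma coeffsSpan_piRep [∀ i, Finite (G i)] {J : ι → Type*} [∀ i, Finite (J i)]
    {t : ∀ i, J i → Type*} [∀ i j, Fintype (t i j)] [∀ i j, DecidableEq (t i j)]
    {ρ : ∀ i j, G i →* Matrix (t i j) (t i j) K} (hρ : ∀ i, CoeffsSpan (ρ i)) :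
    CoeffsSpan fun w : ∀ i, J i => piRep fun i => ρ i (w i) := by
  rw [CoeffsSpan, ← top_le_iff, ← span_range_prod_eq_top hρ]
  refine Submodule.span_mono ?_
  rintro _ ⟨x, rfl⟩
  exact ⟨⟨fun i => (x i).1, fun i => (x i).2.1, fun i => (x i).2.2⟩, rfl⟩

end ProductRep

section MonomialRep

variable {K M P G : Type*} [Monoid M] [Group G]

/-- `B d q g p` says that the matrix of `d`, with rows and columns indexed by `P` and entries in the
group `G` with a zero adjoined, has the nonzero entry `g` in row `q` and column `p`. The relation
`B` is monomial if these matrices have at most one nonzero entry in each column and are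
multiplicative. -/
structure IsMonomial (B : M → P → G → P → Prop) : Prop where
  unique : ∀ {d p q g q' g'}, B d q g p → B d q' g' p → q = q' ∧ g = g'
  one : ∀ {p q g}, B 1 q g p ↔ q = p ∧ g = 1
  mul : ∀ {d d' p q g}, B (d * d') q g p ↔ ∃ r h h', B d q h r ∧ B d' r h' p ∧ g = h * h'

variable [Fintype P] [Fintype G]

open scoped Classical in
lemma IsMonomial.sum_apply_mul {A : Type*} [AddCommMonoid A] {B : M → P → G → P → Prop}
    (hB : IsMonomial B) (d d' : M) (q p : P) (f : G → A) :
    ∑ g with B (d * d') q g p, f g =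
      ∑ x : P × G × G with B d q x.2.1 x.1 ∧ B d' x.1 x.2.2 p, f (x.2.1 * x.2.2) := by
  refine (Finset.sum_nbij (fun x : P × G × G => x.2.1 * x.2.2) (fun x hx => ?_) ?_ ?_
    fun _ _ => rfl).symm
  · obtain ⟨hd, hd'⟩ := (Finset.mem_filter.1 hx).2
    exact Finset.mem_filter.2 ⟨Finset.mem_univ _, hB.mul.2 ⟨_, _, _, hd, hd', rfl⟩⟩
  · rintro ⟨r, g, g'⟩ hx ⟨s, h, h'⟩ hy -
    obtain ⟨hg, hg'⟩ := (Finset.mem_filter.1 hx).2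
    obtain ⟨hh, hh'⟩ := (Finset.mem_filter.1 hy).2
    obtain ⟨rfl, rfl⟩ := hB.unique hg' hh'
    obtain ⟨-, rfl⟩ := hB.unique hg hh
    rfl
  · intro g hg
    obtain ⟨r, h, h', hd, hd', rfl⟩ := hB.mul.1 (Finset.mem_filter.1 hg).2
    exact ⟨(r, h, h'), Finset.mem_filter.2 ⟨Finset.mem_univ _, hd, hd'⟩, rfl⟩

variable [DecidableEq P]

open scoped Classical in
/-- The matrix representation over a ring `R` obtained by applying `σ` to the entries of the
matrices of a monomial relation. -/
noncomputable def monomialMatrix {R : Type*} [Ring R] {B : M → P → G → P → Prop}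
    (hB : IsMonomial B) (σ : G →* R) : M →* Matrix P P R where
  toFun d := Matrix.of fun q p => ∑ g with B d q g p, σ g
  map_one' := by
    ext q p
    by_cases hqp : q = p <;>
      simp [hB.one, hqp, Matrix.one_apply, Finset.sum_filter]
  map_mul' d d' := by
    ext q p
    simp only [Matrix.of_apply, Matrix.mul_apply, hB.sum_apply_mul, Finset.sum_filter,
      Fintype.sum_prod_type, Finset.sum_mul_sum, ite_zero_mul_ite_zero, map_mul]

/-- The matrix representation of `M` induced from the matrix representation `σ` of `G` along a
monomial relation. -/
noncomputable def monomialRep [Field K] {t : Type*} [Fintype t] [DecidableEq t]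
    {B : M → P → G → P → Prop} (hB : IsMonomial B) (σ : G →* Matrix t t K) :
    M →* Matrix (P × t) (P × t) K :=
  (Matrix.compRingEquiv P t K : _ →* _).comp (monomialMatrix hB σ)

open scoped Classical in
lemma monomialRep_apply [Field K] {t : Type*} [Fintype t] [DecidableEq t]
    {B : M → P → G → P → Prop} (hB : IsMonomial B) (σ : G →* Matrix t t K) (d : M) (x y : P × t) :
    monomialRep hB σ d x y = ∑ g with B d x.1 g y.1, σ g x.2 y.2 :=
  Matrix.sum_apply ..

lemma coeffsSpan_monomialRep [Field K] {α : Type*} {P G : α → Type*} [∀ a, Fintype (P a)]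
    [∀ a, DecidableEq (P a)] [∀ a, Group (G a)] [∀ a, Fintype (G a)]
    {B : ∀ a, M → P a → G a → P a → Prop} (hB : ∀ a, IsMonomial (B a))
    (hspan : Submodule.span K (Set.range fun x : Σ a, P a × G a × P a =>
      Set.indicator {d | B x.1 d x.2.1 x.2.2.1 x.2.2.2} (1 : M → K)) = ⊤)
    {J : α → Type*} {t : ∀ a, J a → Type*} [∀ a j, Fintype (t a j)] [∀ a j, DecidableEq (t a j)]
    {σ : ∀ a j, G a →* Matrix (t a j) (t a j) K} (hσ : ∀ a, CoeffsSpan (σ a)) :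
    CoeffsSpan fun x : Σ a, J a => monomialRep (hB x.1) (σ x.1 x.2) := by
  classical
  rw [CoeffsSpan, ← top_le_iff, ← hspan, Submodule.span_le]
  rintro _ ⟨⟨a, q, g, p⟩, rfl⟩
  let F : (G a → K) →ₗ[K] (M → K) :=
    Fintype.linearCombination K fun h => Set.indicator {d | B a d q h p} 1
  have hF : ∀ φ d, F φ d = ∑ h with B a d q h p, φ h := fun φ d => by
    simp [F, Fintype.linearCombination_apply, Set.indicator_apply, Finset.sum_filter]
  have hmem : F (Pi.single g 1) ∈ (⊤ : Submodule K (G a → K)).map F :=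
    Submodule.mem_map_of_mem Submodule.mem_top
  rw [← hσ a, Submodule.map_span, Fintype.linearCombination_apply_single, one_smul] at hmem
  refine Submodule.span_mono ?_ hmem
  rintro _ ⟨_, ⟨⟨j, r, c⟩, rfl⟩, rfl⟩
  refine ⟨⟨⟨a, j⟩, (q, r), (p, c)⟩, funext fun d => ?_⟩
  rw [hF]
  exact monomialRep_apply (hB a) (σ a j) d (q, r) (p, c)

end MonomialRep

-- By induction on `e`, the indicator of `{e}` is that of `Set.Iic e` minus those of the `{d}` with
-- `d < e`.
lemma span_indicator_Iic_eq_top (K : Type*) {M : Type*} [Ring K] [PartialOrder M] [Finite M] :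
    Submodule.span K (Set.range fun e : M => (Set.Iic e).indicator (1 : M → K)) = ⊤ := by
  classical
  have := Fintype.ofFinite M
  set N := Submodule.span K (Set.range fun e : M => (Set.Iic e).indicator (1 : M → K))
  have hsingle : ∀ e : M, Pi.single e (1 : K) ∈ N := fun e => by
    induction e using WellFoundedLT.induction with
    | ind e ih =>
      have he : Pi.single e (1 : K) = (Set.Iic e).indicator 1 -
          ∑ d with d < e, Pi.single d (1 : K) := by
        ext c
        rcases eq_or_ne c e with rfl | hc
        · simp [Finset.sum_apply, Pi.single_apply]
        · simp [Finset.sum_apply, Pi.single_apply, Set.indicator_apply, hc, lt_iff_le_and_ne]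
      rw [he]
      exact N.sub_mem (Submodule.subset_span ⟨e, rfl⟩)
        (N.sum_mem fun d hd => ih d (Finset.mem_filter.1 hd).2)
  rw [← top_le_iff, ← (Pi.basisFun K M).span_eq, Submodule.span_le]
  rintro _ ⟨e, rfl⟩
  rw [Pi.basisFun_apply]
  exact hsingle e

section Labelling

variable {α : Type*} {m : ℕ} {a b : Fin m → ℕ}

/-- `p` labels the elements of `α` by the blocks of a set partition of `α`, where for each `i` there
are `a i` blocks, numbered by `Fin (a i)`, of size `i + 1`. -/
def IsLabelling (a : Fin m → ℕ) (p : α → Σ i, Fin (a i)) : Prop :=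
  ∀ l, {x | p x = l}.ncard = l.1 + 1

/-- The permutation of the labels by which a family of permutations, one for each block size, acts
on labellings. -/
abbrev relabel : (∀ i, Equiv.Perm (Fin (a i))) →* Equiv.Perm (Σ i, Fin (a i)) :=
  Equiv.Perm.sigmaCongrRightHom _

namespace IsLabelling

variable {p q : α → Σ i, Fin (a i)}

lemma surjective (hp : IsLabelling a p) : Function.Surjective p := fun l =>
  Set.nonempty_of_ncard_ne_zero ((hp l).trans_ne l.1.val.succ_ne_zero)

lemma sum_eq [Finite α] (hp : IsLabelling a p) :
    ∑ i : Fin m, ((i : ℕ) + 1) * a i = Nat.card α := by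
  calc ∑ i : Fin m, ((i : ℕ) + 1) * a i
    _ = ∑ l : Σ i, Fin (a i), ((l.1 : ℕ) + 1) := by simp [Fintype.sum_sigma, mul_comm]
    _ = ∑ l, Nat.card {x // p x = l} := Finset.sum_congr rfl fun l _ => (hp l).symm
    _ = Nat.card α := by rw [← Nat.card_sigma, Nat.card_congr (Equiv.sigmaFiberEquiv p)]

lemma exists_injective_of_ker_eq {q : α → Σ i, Fin (b i)} (hp : IsLabelling a p)
    (hq : IsLabelling b q) (h : Setoid.ker p = Setoid.ker q) :
    ∃ g : ∀ i, Fin (a i) → Fin (b i), (∀ i, Function.Injective (g i)) ∧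
      q = Sigma.map id g ∘ p := by
  have hpq : ∀ x y, p y = p x ↔ q y = q x := fun x y => by
    rw [← Setoid.ker_def, ← Setoid.ker_def, h]
  have hfst : ∀ x, (q x).1 = (p x).1 := fun x => by
    have hcard := hq (q x)
    simp only [← hpq, hp (p x), add_left_inj] at hcard
    exact (Fin.ext hcard).symm
  have hlabel : ∀ i (l : Fin (a i)), ∃ l' : Fin (b i), ∀ x, p x = ⟨i, l⟩ → q x = ⟨i, l'⟩ := by
    intro i l
    obtain ⟨x, hx⟩ := hp.surjective ⟨i, l⟩
    obtain rfl : (q x).1 = i := by rw [hfst, hx]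
    exact ⟨(q x).2, fun y hy => (hpq x y).1 (hy.trans hx.symm)⟩
  choose g hg using hlabel
  refine ⟨g, fun i l l' hl => ?_, funext fun x => hg _ _ x rfl⟩
  obtain ⟨x, hx⟩ := hp.surjective ⟨i, l⟩
  obtain ⟨y, hy⟩ := hp.surjective ⟨i, l'⟩
  have hxy : p x = p y := (hpq y x).2 (by rw [hg i l x hx, hg i l' y hy, hl])
  exact sigma_mk_injective (i := i) (hx.symm.trans (hxy.trans hy))

lemma type_eq {q : α → Σ i, Fin (b i)} (hp : IsLabelling a p) (hq : IsLabelling b q)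
    (h : Setoid.ker p = Setoid.ker q) : a = b := by
  obtain ⟨g, hg, -⟩ := hp.exists_injective_of_ker_eq hq h
  obtain ⟨g', hg', -⟩ := hq.exists_injective_of_ker_eq hp h.symm
  exact funext fun i => le_antisymm (by simpa using Fintype.card_le_of_injective _ (hg i))
    (by simpa using Fintype.card_le_of_injective _ (hg' i))

lemma exists_relabel (hp : IsLabelling a p) (hq : IsLabelling a q)
    (h : Setoid.ker p = Setoid.ker q) : ∃ g, q = relabel g ∘ p := by
  obtain ⟨g, hg, rfl⟩ := hp.exists_injective_of_ker_eq hq h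
  exact ⟨fun i => Equiv.ofBijective (g i) (Finite.injective_iff_bijective.1 (hg i)), rfl⟩

lemma relabel_comp_inj (hp : IsLabelling a p) {g g' : ∀ i, Equiv.Perm (Fin (a i))} :
    relabel g ∘ p = relabel g' ∘ p ↔ g = g' := by
  rw [hp.surjective.injective_comp_right.eq_iff, DFunLike.coe_injective.eq_iff,
    Equiv.Perm.sigmaCongrRightHom_injective.eq_iff]

lemma relabel_comp (hp : IsLabelling a p) (g : ∀ i, Equiv.Perm (Fin (a i))) :
    IsLabelling a (relabel g ∘ p) := fun l => by
  simp only [Function.comp_apply, ← Equiv.eq_symm_apply]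
  exact hp _

lemma comp_perm (hp : IsLabelling a p) (z : Equiv.Perm α) : IsLabelling a (p ∘ z) := fun l =>
  (Set.ncard_preimage_of_injective_subset_range z.injective (by simp [z.range_eq_univ])).trans
    (hp l)

end IsLabelling

/-- The set partition `π` has `a i` blocks of size `i + 1`, for each `i`. -/
def HasType (π : Setoid α) (a : Fin m → ℕ) : Prop :=
  ∃ p, IsLabelling a p ∧ Setoid.ker p = π

lemma exists_hasType [Finite α] (hm : Nat.card α ≤ m) (π : Setoid α) :
    ∃ a : Fin m → ℕ, HasType π a := by
  classical
  have := Fintype.ofFinite (Quotient π)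
  have hsize : ∀ c : Quotient π, ∃ i : Fin m, {x | (⟦x⟧ : Quotient π) = c}.ncard = i + 1 := by
    rintro ⟨x⟩
    have hpos : 0 < {y | (⟦y⟧ : Quotient π) = ⟦x⟧}.ncard :=
      (Set.ncard_pos (Set.toFinite _)).2 ⟨x, rfl⟩
    obtain ⟨i, hi⟩ := Nat.exists_eq_succ_of_ne_zero hpos.ne'
    exact ⟨⟨i, Nat.lt_of_succ_le (hi ▸ (Set.ncard_le_card _).trans hm)⟩, hi⟩
  choose size hsize using hsize
  let f : Quotient π ≃ Σ i, Fin (Fintype.card {c // size c = i}) :=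
    (Equiv.sigmaFiberEquiv size).symm.trans
      (Equiv.sigmaCongrRight fun i => Fintype.equivFin {c // size c = i})
  refine ⟨_, fun x => f ⟦x⟧, fun l => ?_, ?_⟩
  · obtain ⟨c, rfl⟩ := f.surjective l
    simp only [f.injective.eq_iff]
    exact hsize c
  · ext x y
    rw [Setoid.ker_def, f.injective.eq_iff, Quotient.eq]

lemma exists_isLabelling_of_sum_eq [Finite α] (h : ∑ i : Fin m, ((i : ℕ) + 1) * a i = Nat.card α) :
    ∃ p : α → Σ i, Fin (a i), IsLabelling a p := by
  obtain ⟨e⟩ : Nonempty (α ≃ Σ l : Σ i, Fin (a i), Fin (l.1 + 1)) := by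
    rw [← Finite.card_eq, ← h]
    simp [Fintype.sum_sigma, mul_comm]
  refine ⟨fun x => (e x).1, fun l => ?_⟩
  calc {x | (e x).1 = l}.ncard
    _ = Nat.card {s : Σ l : Σ i, Fin (a i), Fin (l.1 + 1) // s.1 = l} :=
      Nat.card_congr (e.subtypeEquiv fun _ => Iff.rfl)
    _ = l.1 + 1 := by rw [Nat.card_congr (Equiv.sigmaSubtype l), Nat.card_fin]

section Finpartition

open scoped Finset

variable [Fintype α] [DecidableEq α]

lemma ker_part_apply (P : Finpartition (Finset.univ : Finset α)) (x y : α) :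
    Setoid.ker P.part x y ↔ x ∈ P.part y := by
  rw [P.mem_part_iff_part_eq_part (Finset.mem_univ _) (Finset.mem_univ _), Setoid.ker_def]

lemma parts_eq_image_part (P : Finpartition (Finset.univ : Finset α)) :
    P.parts = Finset.univ.image P.part := by
  ext s
  rw [Finset.mem_image]
  exact ⟨fun hs => P.part_surjOn hs, fun ⟨x, hx, hs⟩ => hs ▸ P.part_mem.2 hx⟩

open scoped Classical in
/-- The set partitions of a finite type, as `Finpartition`s and as equivalence relations. -/
noncomputable def finpartitionEquivSetoid : Finpartition (Finset.univ : Finset α) ≃ Setoid α where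
  toFun P := Setoid.ker P.part
  invFun π := Finpartition.ofSetoid π
  left_inv P := by
    have hpart : (Finpartition.ofSetoid (Setoid.ker P.part)).part = P.part := by
      ext x y
      rw [Finpartition.mem_part_ofSetoid_iff_rel, Setoid.comm', ker_part_apply]
    exact Finpartition.ext (by rw [parts_eq_image_part, hpart, parts_eq_image_part])
  right_inv π := by
    ext x y
    rw [ker_part_apply, Finpartition.mem_part_ofSetoid_iff_rel, Setoid.comm']

lemma IsLabelling.card_parts {p : α → Σ i, Fin (a i)} (hp : IsLabelling a p)
    {P : Finpartition (Finset.univ : Finset α)} (h : Setoid.ker p = Setoid.ker P.part)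
    (i : Fin m) : #{s ∈ P.parts | #s = i + 1} = a i := by
  have hpart : ∀ x y, P.part x = P.part y ↔ p x = p y := fun x y => by
    rw [← Setoid.ker_def, ← h, Setoid.ker_def]
  have hcard : ∀ x, #(P.part x) = (p x).1 + 1 := fun x => by
    simp only [← hp (p x), ← hpart, ← Set.ncard_coe_finset]
    exact congrArg Set.ncard (Set.ext fun y => (ker_part_apply P y x).symm)
  choose x hx using hp.surjective
  have hbij : #(Finset.univ : Finset (Fin (a i))) = #{s ∈ P.parts | #s = i + 1} := by
    refine Finset.card_nbij (fun l => P.part (x ⟨i, l⟩)) (fun l _ => ?_) (fun l _ l' _ hl => ?_) ?_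
    · simp [hcard, hx, P.part_mem]
    · rw [hpart, hx, hx] at hl
      exact sigma_mk_injective (i := i) hl
    · intro s hs
      obtain ⟨hs, hsi⟩ := Finset.mem_filter.1 hs
      obtain ⟨y, -, rfl⟩ := P.part_surjOn hs
      obtain rfl : (p y).1 = i := Fin.ext (Nat.succ_injective ((hcard y).symm.trans hsi))
      exact ⟨(p y).2, Finset.mem_coe.2 (Finset.mem_univ _), (hpart _ _).2 (hx _)⟩
  rw [← hbij, Finset.card_fin]

lemma card_hasType (hm : Fintype.card α ≤ m) (a : Fin m → ℕ) :
    Nat.card {π : Setoid α // HasType π a} =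
      Nat.card {P : Finpartition (Finset.univ : Finset α) //
        ∀ i : Fin m, #{s ∈ P.parts | #s = i + 1} = a i} := by
  refine (Nat.card_congr (finpartitionEquivSetoid.subtypeEquiv fun P => ⟨fun hP => ?_, ?_⟩)).symm
  · obtain ⟨b, p, hp, h⟩ := exists_hasType (Nat.card_eq_fintype_card.trans_le hm)
      (Setoid.ker P.part)
    obtain rfl : b = a := funext fun i => (hp.card_parts h i).symm.trans (hP i)
    exact ⟨p, hp, h⟩
  · rintro ⟨p, hp, h⟩
    exact IsLabelling.card_parts hp h

end Finpartition

end Labelling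

section Action

variable {k : ℕ} {L : Type*} {d d' : Setoid (Fin k ⊕ Fin k)} {p q : Fin k → L}

/-- Stacking the diagram `d` on the labelling `p` of its bottom row gives the labelling `q` of its
top row. -/
def Acts (d : Setoid (Fin k ⊕ Fin k)) (q p : Fin k → L) : Prop :=
  d ≤ Setoid.ker (Sum.elim q p)

lemma acts_ubpOne : Acts (ubpOne k) q p ↔ q = p := by
  refine ⟨fun h => funext fun x => h (x := .inl x) (y := .inr x) rfl, ?_⟩
  rintro rfl (x | x) (y | y) h
  all_goals exact congrArg q h

lemma Acts.comp (h : Acts d q p) {L' : Type*} (f : L → L') : Acts d (f ∘ q) (f ∘ p) := by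
  rintro (x | x) (y | y) hxy
  all_goals exact congrArg f (h hxy)

lemma Acts.eq_comp (h : Acts d q p) {z : Fin k → Fin k} (hz : ∀ x, d (.inl x) (.inr (z x))) :
    q = p ∘ z :=
  funext fun x => h (hz x)

lemma ker_elim_comp_eq {z : Fin k → Fin k} (hz : ∀ x, d (.inl x) (.inr (z x)))
    (hp : Setoid.ker p = botPart d) : Setoid.ker (Sum.elim (p ∘ z) p) = d := by
  have hbot : ∀ u, d u (.inr (Sum.elim z id u)) := by
    rintro (x | x)
    exacts [hz x, d.refl' _]
  ext u v
  calc Setoid.ker (Sum.elim (p ∘ z) p) u v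
    _ ↔ Setoid.ker p (Sum.elim z id u) (Sum.elim z id v) := by
      rw [Setoid.ker_def, Setoid.ker_def, ← Function.comp_apply (f := p),
        ← Function.comp_apply (f := p), Sum.comp_elim, Function.comp_id]
    _ ↔ d (.inr (Sum.elim z id u)) (.inr (Sum.elim z id v)) := by
      rw [hp, botPart, Setoid.comap_rel]
    _ ↔ d u v :=
      ⟨fun h => d.trans' (hbot u) (d.trans' h (d.symm' (hbot v))),
        fun h => d.trans' (d.symm' (hbot u)) (d.trans' h (hbot v))⟩

lemma liftSetoid_le_iff {f : Fin k ⊕ Fin k → Fin k ⊕ (Fin k ⊕ Fin k)}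
    {s : Setoid (Fin k ⊕ (Fin k ⊕ Fin k))} : liftSetoid k f d ≤ s ↔ d ≤ Setoid.comap f s := by
  refine ⟨fun h x y hxy => h (Relation.EqvGen.rel _ _ ⟨x, y, hxy, rfl, rfl⟩),
    fun h => Setoid.eqvGen_le ?_⟩
  rintro _ _ ⟨x, y, hxy, rfl, rfl⟩
  exact h hxy

namespace IsUniform

lemma exists_perm (hd : IsUniform k d) :
    ∃ z : Equiv.Perm (Fin k), ∀ x, d (.inl x) (.inr (z x)) := by
  have hblock : ∀ c : Quotient d, Nonempty ({x // (⟦.inl x⟧ : Quotient d) = c} ≃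
      {y // (⟦.inr y⟧ : Quotient d) = c}) := by
    refine Quotient.ind fun w => Finite.card_eq.1 ?_
    simp only [Quotient.eq]
    exact hd w
  let e := fun c => (hblock c).some
  exact ⟨Equiv.ofFiberEquiv e, fun x => Quotient.exact (Equiv.ofFiberEquiv_map e x).symm⟩

lemma eq_of_acts (hd : IsUniform k d) {q' : Fin k → L} (h : Acts d q p) (h' : Acts d q' p) :
    q = q' := by
  obtain ⟨z, hz⟩ := hd.exists_perm
  rw [h.eq_comp hz, h'.eq_comp hz]

lemma acts_mul (hd' : IsUniform k d') :
    Acts (ubpMul d d') q p ↔ ∃ r, Acts d q r ∧ Acts d' r p := by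
  set J := liftSetoid k (row12 k) d ⊔ liftSetoid k (row23 k) d'
  have hd_le : d ≤ Setoid.comap (row12 k) J := liftSetoid_le_iff.1 le_sup_left
  have hd'_le : d' ≤ Setoid.comap (row23 k) J := liftSetoid_le_iff.1 le_sup_right
  constructor
  · -- the middle row inherits its labels from the bottom row along `d'`
    intro h
    obtain ⟨z, hz⟩ := hd'.exists_perm
    let outer : Fin k ⊕ (Fin k ⊕ Fin k) → Fin k ⊕ Fin k := Sum.elim .inl (Sum.elim (.inr ∘ z) .inr)
    have houter : ∀ u, J u (row13 k (outer u)) := by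
      rintro (x | y | y)
      exacts [J.refl' _, hd'_le (hz y), J.refl' _]
    have hlabel : J ≤ Setoid.comap outer (Setoid.ker (Sum.elim q p)) := fun u v huv =>
      h (J.trans' (J.symm' (houter u)) (J.trans' huv (houter v)))
    refine ⟨p ∘ z, ?_, ?_⟩
    · rintro (x | x) (y | y) hxy
      all_goals exact hlabel (hd_le hxy)
    · rintro (x | x) (y | y) hxy
      all_goals exact hlabel (hd'_le hxy)
  · rintro ⟨r, hqr, hrp⟩
    have hlabel : J ≤ Setoid.ker (Sum.elim q (Sum.elim r p)) := by
      refine sup_le (liftSetoid_le_iff.2 ?_) (liftSetoid_le_iff.2 ?_)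
      · rintro (x | x) (y | y) hxy
        all_goals exact hqr hxy
      · rintro (x | x) (y | y) hxy
        all_goals exact hrp hxy
    rintro (x | x) (y | y) hxy
    all_goals exact hlabel hxy

end IsUniform

variable {a : Fin k → ℕ} {p q : Fin k → Σ i, Fin (a i)}

lemma IsLabelling.isUniform_ker (hq : IsLabelling a q) (hp : IsLabelling a p) :
    IsUniform k (Setoid.ker (Sum.elim q p)) := fun _ =>
  (hq _).trans (hp _).symm

lemma IsLabelling.of_acts (hp : IsLabelling a p) (hd : IsUniform k d) (h : Acts d q p) :
    IsLabelling a q := by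
  obtain ⟨z, hz⟩ := hd.exists_perm
  rw [h.eq_comp hz]
  exact hp.comp_perm z

end Action

section Classification

variable {k : ℕ}

/-- The multiplicities `(a₁, …, a_k)` of the parts of a partition `1^{a₁} ⋯ k^{a_k}` of `k`. -/
abbrev PartitionType (k : ℕ) : Type := {a : Fin k → ℕ // ∑ i : Fin k, ((i : ℕ) + 1) * a i = k}

/-- The set partitions of `[k]` with `a i` blocks of size `i + 1`, for each `i`. -/
abbrev PartitionOfType (a : Fin k → ℕ) : Type := {π : Setoid (Fin k) // HasType π a}

lemma finite_setoid (X : Type*) [Finite X] : Finite (Setoid X) :=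
  Finite.of_injective (β := X → X → Prop) (fun s => s.r) fun _ _ h =>
    Setoid.ext fun x y => iff_of_eq (congrFun₂ h x y)

noncomputable instance fintypePartitionOfType (a : Fin k → ℕ) : Fintype (PartitionOfType a) :=
  have := finite_setoid (Fin k)
  Fintype.ofFinite _

instance finite_ubpel : Finite (UBPel k) :=
  have := finite_setoid (Fin k ⊕ Fin k)
  inferInstanceAs (Finite {d : Setoid (Fin k ⊕ Fin k) // IsUniform k d})

noncomputable instance fintypePartitionType : Fintype (PartitionType k) := by
  have hle (a : PartitionType k) (i : Fin k) : a.1 i ≤ k :=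
    calc a.1 i
      _ ≤ ((i : ℕ) + 1) * a.1 i := Nat.le_mul_of_pos_left _ i.val.succ_pos
      _ ≤ ∑ i : Fin k, ((i : ℕ) + 1) * a.1 i :=
        Finset.single_le_sum_of_canonicallyOrdered (f := fun i : Fin k => ((i : ℕ) + 1) * a.1 i)
          (Finset.mem_univ i)
      _ = k := a.2
  exact ((Set.finite_Iic fun _ : Fin k => k).subset fun a ha => hle ⟨a, ha⟩).fintype

/-- Uniform block permutations are ordered by refinement. -/
instance : PartialOrder (UBPel k) :=
  inferInstanceAs (PartialOrder {d : Setoid (Fin k ⊕ Fin k) // IsUniform k d})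

variable {a : Fin k → ℕ}

/-- A fixed labelling of the blocks of a set partition of type `a`. -/
noncomputable def label (π : PartitionOfType a) : Fin k → Σ i, Fin (a i) :=
  π.2.choose

lemma isLabelling_label (π : PartitionOfType a) : IsLabelling a (label π) :=
  π.2.choose_spec.1

lemma ker_label (π : PartitionOfType a) : Setoid.ker (label π) = π :=
  π.2.choose_spec.2

lemma ker_relabel_comp (g : ∀ i, Equiv.Perm (Fin (a i))) (p : Fin k → Σ i, Fin (a i)) :
    Setoid.ker (relabel g ∘ p) = Setoid.ker p :=
  Setoid.ext fun _ _ => (relabel g).injective.eq_iff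

lemma relabel_comp_label_inj {g h : ∀ i, Equiv.Perm (Fin (a i))} {π π' : PartitionOfType a} :
    relabel g ∘ label π = relabel h ∘ label π' ↔ π = π' ∧ g = h := by
  refine ⟨fun heq => ?_, fun ⟨hπ, hg⟩ => by rw [hπ, hg]⟩
  obtain rfl : π = π' := Subtype.ext <| by
    rw [← ker_label, ← ker_label, ← ker_relabel_comp g, heq, ker_relabel_comp]
  exact ⟨rfl, (isLabelling_label π).relabel_comp_inj.1 heq⟩

lemma IsLabelling.exists_relabel_comp_label {p : Fin k → Σ i, Fin (a i)} (hp : IsLabelling a p) :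
    ∃ (g : ∀ i, Equiv.Perm (Fin (a i))) (π : PartitionOfType a), p = relabel g ∘ label π := by
  obtain ⟨g, hg⟩ := (isLabelling_label ⟨Setoid.ker p, p, hp, rfl⟩).exists_relabel hp (ker_label _)
  exact ⟨g, _, hg⟩

/-- The uniform block permutation with bottom row `π` and top row `π'` whose block bijection sends
each block of `π` to the block of `π'` with the label permuted by `g`. -/
noncomputable def diagram (π' : PartitionOfType a) (g : ∀ i, Equiv.Perm (Fin (a i)))
    (π : PartitionOfType a) : UBPel k :=
  ⟨Setoid.ker (Sum.elim (relabel g⁻¹ ∘ label π') (label π)),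
    ((isLabelling_label π').relabel_comp _).isUniform_ker (isLabelling_label π)⟩

/-- The relation whose matrices, with rows and columns indexed by the set partitions of type `a`,
give the left action of `U_k` on the labellings of type `a`, a free right module over the group of
relabellings: `d` carries the fixed labelling of `π` to that of `π'`, relabelled by `g⁻¹`. -/
def Connects (d : UBPel k) (π' : PartitionOfType a) (g : ∀ i, Equiv.Perm (Fin (a i)))
    (π : PartitionOfType a) : Prop :=
  d ≤ diagram π' g π

lemma connects_iff_acts {d : UBPel k} {π' π : PartitionOfType a}
    {g : ∀ i, Equiv.Perm (Fin (a i))} :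
    Connects d π' g π ↔ Acts d.1 (relabel g⁻¹ ∘ label π') (label π) :=
  Iff.rfl

lemma Connects.unique {d : UBPel k} {π q q' : PartitionOfType a}
    {g g' : ∀ i, Equiv.Perm (Fin (a i))} (h : Connects d q g π) (h' : Connects d q' g' π) :
    q = q' ∧ g = g' := by
  simpa only [relabel_comp_label_inj, inv_inj] using d.2.eq_of_acts h h'

lemma isMonomial_connects [Monoid (UBPel k)]
    (hmul : ∀ a b : UBPel k, (a * b).1 = ubpMul a.1 b.1) (hone : (1 : UBPel k).1 = ubpOne k)
    (a : Fin k → ℕ) : IsMonomial (Connects (a := a)) where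
  unique := Connects.unique
  one {p q g} := by
    rw [connects_iff_acts, hone, acts_ubpOne, ← inv_eq_one, ← relabel_comp_label_inj, map_one,
      Equiv.Perm.coe_one, Function.id_comp]
  mul {d d' p q g} := by
    simp only [connects_iff_acts, hmul, d'.2.acts_mul]
    constructor
    · rintro ⟨r, hqr, hrp⟩
      obtain ⟨h', π, rfl⟩ :=
        ((isLabelling_label p).of_acts d'.2 hrp).exists_relabel_comp_label
      refine ⟨π, g * h', h'⁻¹, ?_, by rwa [inv_inv], (mul_inv_cancel_right g h').symm⟩
      simpa only [← Function.comp_assoc, ← Equiv.Perm.coe_mul, ← map_mul, inv_mul_cancel, map_one,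
        Equiv.Perm.coe_one, Function.id_comp, mul_inv_rev] using hqr.comp (relabel h'⁻¹)
    · rintro ⟨π, h, h', hqπ, hπp, rfl⟩
      refine ⟨relabel h'⁻¹ ∘ label π, ?_, hπp⟩
      rw [mul_inv_rev, map_mul, Equiv.Perm.coe_mul, Function.comp_assoc]
      exact hqπ.comp _

lemma exists_diagram_eq (d : UBPel k) : ∃ (a : Fin k → ℕ) (π' : PartitionOfType a)
    (g : ∀ i, Equiv.Perm (Fin (a i))) (π : PartitionOfType a), diagram π' g π = d := by
  obtain ⟨a, ha⟩ := exists_hasType (Nat.card_fin k).le (botPart d.1)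
  let π : PartitionOfType a := ⟨botPart d.1, ha⟩
  obtain ⟨z, hz⟩ := d.2.exists_perm
  obtain ⟨g, π', hg⟩ := ((isLabelling_label π).comp_perm z).exists_relabel_comp_label
  refine ⟨a, π', g⁻¹, π, Subtype.ext ?_⟩
  simp only [diagram, inv_inv, ← hg, ker_elim_comp_eq hz (ker_label π)]

lemma diagram_injective : Function.Injective fun x : Σ a : Fin k → ℕ,
    PartitionOfType a × (∀ i, Equiv.Perm (Fin (a i))) × PartitionOfType a =>
      diagram x.2.1 x.2.2.1 x.2.2.2 := by
  rintro ⟨a, p', g, p⟩ ⟨b, q', h, q⟩ heq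
  replace heq : diagram p' g p = diagram q' h q := heq
  have hbot : Setoid.ker (label p) = Setoid.ker (label q) :=
    congrArg (fun d : UBPel k => botPart d.1) heq
  obtain rfl : a = b := (isLabelling_label p).type_eq (isLabelling_label q) hbot
  obtain rfl : p = q := Subtype.ext (by rw [← ker_label, hbot, ker_label])
  obtain ⟨rfl, rfl⟩ := Connects.unique (d := diagram p' g p) le_rfl heq.le
  rfl

lemma diagram_bijective : Function.Bijective fun x : Σ a : PartitionType k,
    PartitionOfType a.1 × (∀ i, Equiv.Perm (Fin (a.1 i))) × PartitionOfType a.1 =>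
      diagram x.2.1 x.2.2.1 x.2.2.2 := by
  constructor
  · exact diagram_injective.comp
      (Function.Injective.sigma_map Subtype.val_injective fun _ => Function.injective_id)
  · intro d
    obtain ⟨a, π', g, π, h⟩ := exists_diagram_eq d
    exact ⟨⟨⟨a, (isLabelling_label π).sum_eq.trans (Nat.card_fin k)⟩, π', g, π⟩, h⟩

lemma span_indicator_connects_eq_top (K : Type*) [Ring K] :
    Submodule.span K (Set.range fun x : Σ a : PartitionType k,
      PartitionOfType a.1 × (∀ i, Equiv.Perm (Fin (a.1 i))) × PartitionOfType a.1 =>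
        Set.indicator {d | Connects d x.2.1 x.2.2.1 x.2.2.2} (1 : UBPel k → K)) = ⊤ := by
  rw [← span_indicator_Iic_eq_top K, ← diagram_bijective.2.range_comp]
  rfl

variable (k) in
lemma card_ubpel : Nat.card (UBPel k) = ∑ a : PartitionType k,
    Nat.card (PartitionOfType a.1) ^ 2 * ∏ i, (a.1 i).factorial := by
  rw [← Nat.card_congr (Equiv.ofBijective _ diagram_bijective), Nat.card_sigma]
  refine Finset.sum_congr rfl fun a _ => ?_
  simp only [Nat.card_prod, Nat.card_pi, Nat.card_perm, Nat.card_fin]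
  ring

end Classification

section Irreducibles

variable {k : ℕ}

/-- The index set `I_k` fibred over the types of set partitions: a type `a` and, for each `i`, a
partition of `a i`. -/
abbrev IrrepIndex (k : ℕ) : Type :=
  Σ a : PartitionType k, ∀ i, {μ : YoungDiagram // μ.card = a.1 i}

/-- The basis of the irreducible representation with index `x`: a set partition (an element of the
`L`-class), and a basis vector of the representation of the maximal subgroup. -/
abbrev IrrepBasis (x : IrrepIndex k) : Type :=
  PartitionOfType x.1.1 × ∀ i, Fin (sytCount (x.2 i))

/-- A tuple of partitions determines the type of set partition given by its sizes. -/
def ubpIndexEquiv (k : ℕ) : UBPIndex k ≃ IrrepIndex k where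
  toFun v := ⟨⟨fun i => (v.1 i).card, v.2⟩, fun i => ⟨v.1 i, rfl⟩⟩
  invFun x := ⟨fun i => x.2 i, by simpa only [(x.2 _).2] using x.1.2⟩
  left_inv _ := rfl
  right_inv := by
    rintro ⟨⟨a, ha⟩, w⟩
    obtain ⟨v, hv, rfl⟩ : ∃ (v : Fin k → YoungDiagram) (hv : ∀ i, (v i).card = a i),
        w = fun i => ⟨v i, hv i⟩ := ⟨fun i => w i, fun i => (w i).2, rfl⟩
    obtain rfl : (fun i => (v i).card) = a := funext hv
    rfl

lemma card_irrepBasis (x : IrrepIndex k) : Fintype.card (IrrepBasis x) =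
    Nat.card (PartitionOfType x.1.1) * ∏ i, sytCount (x.2 i) := by
  simp only [Fintype.card_prod, Nat.card_eq_fintype_card, Fintype.card_pi, Fintype.card_fin]

lemma card_irrepBasis_ubpIndexEquiv (v : UBPIndex k) :
    Fintype.card (IrrepBasis (ubpIndexEquiv k v)) =
      spCount k v * ∏ i, sytCount (v.1 i) := by
  rw [card_irrepBasis, card_hasType (Fintype.card_fin k).le]
  rfl

instance nonempty_irrepBasis (x : IrrepIndex k) : Nonempty (IrrepBasis x) := by
  obtain ⟨p, hp⟩ := exists_isLabelling_of_sum_eq (x.1.2.trans (Nat.card_fin k).symm)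
  exact ⟨⟨Setoid.ker p, p, hp, rfl⟩, fun i => ⟨0, sytCount_pos (x.2 i)⟩⟩

variable (k) in
lemma sum_card_irrepBasis_sq :
    ∑ x : IrrepIndex k, Fintype.card (IrrepBasis x) ^ 2 = Nat.card (UBPel k) := by
  rw [card_ubpel, Fintype.sum_sigma]
  refine Finset.sum_congr rfl fun a _ => ?_
  calc ∑ w : ∀ i, {μ : YoungDiagram // μ.card = a.1 i}, Fintype.card (IrrepBasis ⟨a, w⟩) ^ 2
    _ = Nat.card (PartitionOfType a.1) ^ 2 *
        ∑ w : ∀ i, {μ : YoungDiagram // μ.card = a.1 i}, ∏ i, sytCount (w i) ^ 2 := by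
      simp only [card_irrepBasis, mul_pow, Finset.mul_sum, Finset.prod_pow]
    _ = Nat.card (PartitionOfType a.1) ^ 2 * ∏ i, (a.1 i).factorial := by
      simp only [← sum_sytCount_sq, Finset.prod_univ_sum, Fintype.piFinset_univ]

variable (K : Type*) [Field K] [CharZero K] [Monoid (UBPel k)]

open scoped Classical in
theorem exists_algEquiv_pi_matrix_irrepBasis
    (hmul : ∀ a b : UBPel k, (a * b).1 = ubpMul a.1 b.1) (hone : (1 : UBPel k).1 = ubpOne k) :
    Nonempty (MonoidAlgebra K (UBPel k) ≃ₐ[K]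
      ∀ x : IrrepIndex k, Matrix (IrrepBasis x) (IrrepBasis x) K) := by
  choose ρ hρ using exists_coeffsSpan_perm K
  exact exists_algEquiv_of_coeffsSpan
    (coeffsSpan_monomialRep (fun a : PartitionType k => isMonomial_connects hmul hone a.1)
      (span_indicator_connects_eq_top K) fun a => coeffsSpan_piRep fun i => hρ (a.1 i))
    (sum_card_irrepBasis_sq k)

theorem ubp_irreducible_dimension_general
    (hmul : ∀ a b : UBPel k, (a * b).1 = ubpMul a.1 b.1) (hone : (1 : UBPel k).1 = ubpOne k) :
    ∃ W : UBPIndex k → Submodule (MonoidAlgebra K (UBPel k)) (MonoidAlgebra K (UBPel k)),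
      (∀ v, IsSimpleModule (MonoidAlgebra K (UBPel k)) ↥(W v)) ∧
      (∀ v w, Nonempty (↥(W v) ≃ₗ[MonoidAlgebra K (UBPel k)] ↥(W w)) → v = w) ∧
      (∀ S : Submodule (MonoidAlgebra K (UBPel k)) (MonoidAlgebra K (UBPel k)),
        IsSimpleModule (MonoidAlgebra K (UBPel k)) ↥S →
        ∃ v, Nonempty (↥S ≃ₗ[MonoidAlgebra K (UBPel k)] ↥(W v))) ∧
      ∀ v, Module.finrank K ↥(Submodule.restrictScalars K (W v)) =
        spCount k v * ∏ i : Fin k, sytCount (v.1 i) := by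
  classical
  obtain ⟨Φ⟩ := exists_algEquiv_pi_matrix_irrepBasis K hmul hone
  obtain ⟨W, hsimple, hinj, hcomplete, hfinrank⟩ := exists_irreducibles_of_algEquiv_pi_matrix Φ
  refine ⟨fun v => W (ubpIndexEquiv k v), fun v => hsimple _,
    fun v w h => (ubpIndexEquiv k).injective (hinj _ _ h), fun S hS => ?_, fun v => ?_⟩
  · obtain ⟨x, hx⟩ := hcomplete S hS
    obtain ⟨v, rfl⟩ := (ubpIndexEquiv k).surjective x
    exact ⟨v, hx⟩
  · rw [hfinrank, card_irrepBasis_ubpIndexEquiv]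

end Irreducibles

/-- For a monoid structure on `U_k` given by the diagram product,
there is a complete, irredundant family of irreducible representations of `U_k`
(simple modules over the monoid algebra `ℂ[U_k]`) indexed by `I_k`, and the
dimension of the irreducible indexed by `λ⃗` is
`sp_k(λ) · f^{λ^{(1)}} ⋯ f^{λ^{(k)}}`. -/
theorem ubp_irreducible_dimension (k : ℕ) [M : Monoid (UBPel k)]
    (hmul : ∀ a b : UBPel k, (a * b).1 = ubpMul a.1 b.1)
    (hone : (1 : UBPel k).1 = ubpOne k) :
    ∃ W : UBPIndex k →
        Submodule (MonoidAlgebra ℂ (UBPel k)) (MonoidAlgebra ℂ (UBPel k)),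
      (∀ v, IsSimpleModule (MonoidAlgebra ℂ (UBPel k)) ↥(W v)) ∧
      (∀ v w, Nonempty (↥(W v) ≃ₗ[MonoidAlgebra ℂ (UBPel k)] ↥(W w)) → v = w) ∧
      (∀ S : Submodule (MonoidAlgebra ℂ (UBPel k)) (MonoidAlgebra ℂ (UBPel k)),
        IsSimpleModule (MonoidAlgebra ℂ (UBPel k)) ↥S →
        ∃ v, Nonempty (↥S ≃ₗ[MonoidAlgebra ℂ (UBPel k)] ↥(W v))) ∧
      ∀ v, Module.finrank ℂ ↥(Submodule.restrictScalars ℂ (W v)) =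
        spCount k v * ∏ i : Fin k, sytCount (v.1 i) :=
  ubp_irreducible_dimension_general ℂ hmul hone
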